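/- arXiv:1508.06123 — 9 statements merged into one kernel-verified Lean document; each statement's English description precedes it below -/
import Mathlib

section
/- Fix k ∈ ℤ. For every continuously differentiable u: ℝ → ℝ of topological charge k with ∫₀¹ sin(u(x)) dx = 0 and ∫₀¹ cos(u(x)) dx > 0, there exists a unique pair (v, n) with n ∈ ℤ and v: ℝ → ℝ continuous, 1-periodic, ∫₀¹ v = kπ and ∫₀¹ exp(2i(∂ₓ⁻¹v)(x)) dx ≠ 0, such that u(x) = 2(∂ₓ⁻¹v)(x) + c_sg(v) + 2πn for all x, where c_sg(v) is taken with arg valued in (−π, π]; moreover v = u′/2. Conversely, for every such v the function 2∂ₓ⁻¹v + c_sg(v) is continuously differentiable of topological charge k with ∫₀¹ sin = 0 and ∫₀¹ cos > 0. -/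
open MeasureTheory Real intervalIntegral

/-- The mean-zero antiderivative of a (continuous, 1-periodic, mean-zero) function:
`(∂ₓ⁻¹ f)(x) = ∫₀ˣ f(s) ds − ∫₀¹ ∫₀ʸ f(s) ds dy`. -/
noncomputable def pInv (f : ℝ → ℝ) (x : ℝ) : ℝ :=
  (∫ s in (0:ℝ)..x, f s) - ∫ y in (0:ℝ)..1, ∫ s in (0:ℝ)..y, f s

/-- Extension of `∂ₓ⁻¹` to a 1-periodic `v` of mean `a = ∫₀¹ v`:
`(∂ₓ⁻¹ v)(x) = (∂ₓ⁻¹ (v − a))(x) + a·x`. -/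
noncomputable def pInvG (v : ℝ → ℝ) (x : ℝ) : ℝ :=
  pInv (fun s => v s - ∫ t in (0:ℝ)..1, v t) x + (∫ t in (0:ℝ)..1, v t) * x

/-- `K_{sg}(v) = ∫₀¹ exp (2 i (∂ₓ⁻¹ v)(x)) dx`. -/
noncomputable def Ksg (v : ℝ → ℝ) : ℂ :=
  ∫ x in (0:ℝ)..1, Complex.exp (2 * (pInvG v x : ℂ) * Complex.I)

/-- `c_sg(v) = - arg (∫₀¹ exp (2 i (∂ₓ⁻¹ v)(x)) dx)`, with `arg` valued in `(-π, π]`. -/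
noncomputable def cSg (v : ℝ → ℝ) : ℝ := - (Ksg v).arg

lemma pInvG_eq (v : ℝ → ℝ) (hv : Continuous v) (x : ℝ) :
    pInvG v x = (∫ s in (0:ℝ)..x, v s) + pInvG v 0 := by
  unfold pInvG pInv
  rw [intervalIntegral.integral_sub (hv.intervalIntegrable _ _) (by simp)]
  simp
  ring

lemma pInvG_hasDerivAt (v : ℝ → ℝ) (hv : Continuous v) (x : ℝ) :
    HasDerivAt (pInvG v) (v x) x := by
  have h : pInvG v = fun x => (∫ s in (0:ℝ)..x, v s) + pInvG v 0 := funext (pInvG_eq v hv)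
  rw [h]
  exact (intervalIntegral.integral_hasDerivAt_right (hv.intervalIntegrable _ _)
    (hv.stronglyMeasurableAtFilter _ _) hv.continuousAt).add_const _

lemma pInvG_cont (v : ℝ → ℝ) (hv : Continuous v) : Continuous (pInvG v) :=
  continuous_iff_continuousAt.2 fun x => (pInvG_hasDerivAt v hv x).continuousAt

lemma key_int (v : ℝ → ℝ) (hv : Continuous v) (θ : ℝ) :
    ((∫ x in (0:ℝ)..1, Real.cos (2 * pInvG v x + θ) : ℝ) : ℂ)
      + ((∫ x in (0:ℝ)..1, Real.sin (2 * pInvG v x + θ) : ℝ) : ℂ) * Complex.I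
      = Complex.exp (θ * Complex.I) * Ksg v := by
  have hc := pInvG_cont v hv
  unfold Ksg
  rw [← intervalIntegral.integral_const_mul, ← intervalIntegral.integral_ofReal,
    ← intervalIntegral.integral_ofReal, ← intervalIntegral.integral_mul_const,
    ← intervalIntegral.integral_add]
  · apply intervalIntegral.integral_congr
    intro x _
    simp only
    rw [← Complex.exp_add, ← add_mul, Complex.exp_mul_I]
    push_cast
    rw [add_comm (θ : ℂ)]
  · exact Continuous.intervalIntegrable (by fun_prop) _ _
  · exact Continuous.intervalIntegrable (by fun_prop) _ _

lemma key_csg (v : ℝ → ℝ) :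
    Complex.exp ((cSg v : ℝ) * Complex.I) * Ksg v = ((‖Ksg v‖ : ℝ) : ℂ) := by
  conv_lhs => rw [← Complex.norm_mul_exp_arg_mul_I (Ksg v)]
  rw [mul_left_comm, ← Complex.exp_add, cSg]
  simp

/-- parametrization of the branch `P⁺` of charge-`k` functions `u` with
`∫₀¹ sin u = 0` and `∫₀¹ cos u > 0` by `v = u'/2` via `u = 2 ∂ₓ⁻¹v + c_sg(v) (mod 2π)`,
together with the converse. -/
theorem psiSgPlus_parametrization (k : ℤ) :
    (∀ u : ℝ → ℝ, ContDiff ℝ 1 u → (∀ x, u (x + 1) = u x + 2 * π * k) →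
      (∫ x in (0:ℝ)..1, Real.sin (u x)) = 0 →
      0 < (∫ x in (0:ℝ)..1, Real.cos (u x)) →
      (∃! p : (ℝ → ℝ) × ℤ,
        Continuous p.1 ∧ Function.Periodic p.1 1 ∧
        (∫ x in (0:ℝ)..1, p.1 x) = k * π ∧ Ksg p.1 ≠ 0 ∧
        ∀ x, u x = 2 * pInvG p.1 x + cSg p.1 + 2 * π * p.2) ∧
      (∀ p : (ℝ → ℝ) × ℤ,
        (Continuous p.1 ∧ Function.Periodic p.1 1 ∧
          (∫ x in (0:ℝ)..1, p.1 x) = k * π ∧ Ksg p.1 ≠ 0 ∧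
          ∀ x, u x = 2 * pInvG p.1 x + cSg p.1 + 2 * π * p.2) →
        p.1 = fun x => deriv u x / 2)) ∧
    (∀ v : ℝ → ℝ, Continuous v → Function.Periodic v 1 →
      (∫ x in (0:ℝ)..1, v x) = k * π → Ksg v ≠ 0 →
      ContDiff ℝ 1 (fun x => 2 * pInvG v x + cSg v) ∧
      (∀ x, 2 * pInvG v (x + 1) + cSg v = (2 * pInvG v x + cSg v) + 2 * π * k) ∧
      (∫ x in (0:ℝ)..1, Real.sin (2 * pInvG v x + cSg v)) = 0 ∧
      0 < ∫ x in (0:ℝ)..1, Real.cos (2 * pInvG v x + cSg v)) := by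
  refine ⟨fun u hu hper hsin hcos => ?_, fun v hv hvp hvk hK => ⟨?_, ?_, ?_⟩⟩
  · have hder : ∀ p : (ℝ → ℝ) × ℤ,
        (Continuous p.1 ∧ Function.Periodic p.1 1 ∧
          (∫ x in (0:ℝ)..1, p.1 x) = k * π ∧ Ksg p.1 ≠ 0 ∧
          ∀ x, u x = 2 * pInvG p.1 x + cSg p.1 + 2 * π * p.2) →
        p.1 = fun x => deriv u x / 2 := by
      rintro ⟨v, n⟩ ⟨hv, -, -, -, h⟩
      simp only at hv h ⊢
      funext x
      have h1 : HasDerivAt u (2 * v x) x := by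
        rw [funext h]
        exact (((pInvG_hasDerivAt v hv x).const_mul 2).add_const _).add_const _
      rw [h1.deriv]; ring
    refine ⟨?_, hder⟩
    have hdu : Continuous (deriv u) := hu.continuous_deriv le_rfl
    have hud : Differentiable ℝ u := hu.differentiable one_ne_zero
    obtain ⟨v, hvdef⟩ : ∃ v : ℝ → ℝ, v = fun x => deriv u x / 2 := ⟨_, rfl⟩
    have hv : Continuous v := by rw [hvdef]; fun_prop
    have hint : ∀ x, 2 * (∫ s in (0:ℝ)..x, v s) = u x - u 0 := by
      intro x
      rw [hvdef, intervalIntegral.integral_div, intervalIntegral.integral_deriv_eq_sub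
        (fun y _ => hud y) (hdu.intervalIntegrable _ _)]
      ring
    obtain ⟨θ, hθ⟩ : ∃ θ, θ = u 0 - 2 * pInvG v 0 := ⟨_, rfl⟩
    have hux : ∀ x, u x = 2 * pInvG v x + θ := by
      intro x
      rw [pInvG_eq v hv x, hθ]
      linarith [hint x]
    have hkey := key_int v hv θ
    simp only [← hux] at hkey
    rw [hsin] at hkey
    simp only [Complex.ofReal_zero, zero_mul, add_zero] at hkey
    have hK : Ksg v ≠ 0 := by
      intro h0
      rw [h0, mul_zero] at hkey
      exact hcos.ne' (by exact_mod_cast hkey)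
    have hR : (∫ x in (0:ℝ)..1, Real.cos (u x)) = ‖Ksg v‖ := by
      have := congrArg norm hkey
      rw [norm_mul, Complex.norm_exp_ofReal_mul_I, one_mul, Complex.norm_real,
        Real.norm_of_nonneg hcos.le] at this
      exact this
    have he : Complex.exp (θ * Complex.I) = Complex.exp ((cSg v : ℝ) * Complex.I) := by
      apply mul_right_cancel₀ hK
      rw [key_csg, ← hkey, hR]
    obtain ⟨n, hn⟩ := Complex.exp_eq_exp_iff_exists_int.1 he
    have hn' : θ = cSg v + 2 * π * n := by
      have h2 : (θ : ℂ) * Complex.I = ((cSg v + 2 * π * n : ℝ) : ℂ) * Complex.I := by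
        rw [hn]; push_cast; ring
      exact_mod_cast mul_right_cancel₀ Complex.I_ne_zero h2
    refine ⟨(v, n), ⟨hv, ?_, ?_, hK, ?_⟩, ?_⟩
    · intro x
      have h1 : deriv u (x + 1) = deriv u x := by
        rw [← deriv_comp_add_const, funext hper, deriv_add_const]
      simp only [hvdef, h1]
    · have h1 := hint 1
      have h2 := hper 0
      rw [zero_add] at h2
      simp only
      linarith
    · intro x
      simp only
      rw [hux x, hn']; ring
    · rintro ⟨w, m⟩ hw
      have hwv : w = v := by rw [hvdef]; exact hder (w, m) hw
      subst hwv
      have h1 := hw.2.2.2.2 0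
      simp only at h1
      rw [hux 0, hn'] at h1
      have h3 : (2 * π) * (m : ℝ) = (2 * π) * n := by linarith
      have h4 : (m : ℝ) = n := mul_left_cancel₀ (by positivity) h3
      rw [Prod.mk.injEq]
      exact ⟨rfl, by exact_mod_cast h4⟩
  · have hd : ∀ x, HasDerivAt (fun x => 2 * pInvG v x + cSg v) (2 * v x) x := fun x =>
      ((pInvG_hasDerivAt v hv x).const_mul 2).add_const _
    rw [contDiff_one_iff_deriv]
    refine ⟨fun x => (hd x).differentiableAt, ?_⟩
    rw [funext fun x => (hd x).deriv]
    fun_prop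
  · intro x
    rw [pInvG_eq v hv (x + 1), pInvG_eq v hv x,
      ← intervalIntegral.integral_add_adjacent_intervals
        (hv.intervalIntegrable 0 x) (hv.intervalIntegrable x (x + 1)),
      hvp.intervalIntegral_add_eq x 0, zero_add, hvk]
    ring
  · have h := key_int v hv (cSg v)
    rw [key_csg] at h
    have hre := congrArg Complex.re h
    have him := congrArg Complex.im h
    simp only [Complex.add_re, Complex.add_im, Complex.mul_re, Complex.mul_im, Complex.ofReal_re,
      Complex.ofReal_im, Complex.I_re, Complex.I_im, mul_zero, mul_one, zero_add, add_zero,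
      sub_zero] at hre him
    refine ⟨him, ?_⟩
    rw [hre]
    exact norm_pos_iff.2 hK
end

section
/- Fix k ∈ ℤ. Let v, h: ℝ → ℝ be continuous and 1-periodic with ∫₀¹ v = kπ, ∫₀¹ h = 0, and ∫₀¹ exp(2i(∂ₓ⁻¹v)(x)) dx ≠ 0, and define H_sg(w) := ¼ ∫₀¹ cos( 2(∂ₓ⁻¹w)(x) + c_sg(w) ) dx whenever c_sg(w) is defined (the value is independent of the representative of c_sg(w) modulo 2π). Then: (a) the function x ↦ sin( 2(∂ₓ⁻¹v)(x) + c_sg(v) ) is continuous, 1-periodic with mean zero; (b) for all sufficiently small ε, ∫₀¹ exp(2i(∂ₓ⁻¹(v+εh))(x)) dx ≠ 0; and (c) the map ε ↦ H_sg(v + εh) is differentiable at ε = 0 with derivative ½ ∫₀¹ ( ∂ₓ⁻¹ sin(2∂ₓ⁻¹v + c_sg(v)) )(x) · h(x) dx. -/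
open MeasureTheory Real intervalIntegral

/-- The Hamiltonian `H_sg(w) = ¼ ∫₀¹ cos (2 ∂ₓ⁻¹w + c_sg(w))`. -/
noncomputable def HSg (w : ℝ → ℝ) : ℝ :=
  (1 / 4) * ∫ x in (0:ℝ)..1, Real.cos (2 * pInvG w x + cSg w)


theorem aux_pInv_cont (f : ℝ → ℝ) (hf : Continuous f) : Continuous (pInv f) := by
  unfold pInv
  exact (intervalIntegral.continuous_primitive (fun a b => hf.intervalIntegrable a b) 0).sub
    continuous_const

theorem aux_pInv_deriv (f : ℝ → ℝ) (hf : Continuous f) (x : ℝ) :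
    HasDerivAt (pInv f) (f x) x := by
  unfold pInv
  exact (intervalIntegral.integral_hasDerivAt_right (hf.intervalIntegrable _ _)
    hf.stronglyMeasurable.stronglyMeasurableAtFilter hf.continuousAt).sub_const _

theorem aux_pInv_one (f : ℝ → ℝ) (hm : (∫ x in (0:ℝ)..1, f x) = 0) : pInv f 1 = pInv f 0 := by
  simp [pInv, hm]

theorem aux_pInv_add (f g : ℝ → ℝ) (hf : Continuous f) (hg : Continuous g) (ε x : ℝ) :
    pInv (fun s => f s + ε * g s) x = pInv f x + ε * pInv g x := by
  have h1 : ∀ y, (∫ s in (0:ℝ)..y, (f s + ε * g s))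
      = (∫ s in (0:ℝ)..y, f s) + ε * ∫ s in (0:ℝ)..y, g s := by
    intro y
    rw [intervalIntegral.integral_add (hf.intervalIntegrable _ _)
      (Continuous.intervalIntegrable (u := fun s => ε * g s) (by fun_prop) _ _), intervalIntegral.integral_const_mul]
  have cf := intervalIntegral.continuous_primitive (fun a b => hf.intervalIntegrable (μ := volume) a b) 0
  have cg := intervalIntegral.continuous_primitive (fun a b => hg.intervalIntegrable (μ := volume) a b) 0
  unfold pInv
  simp only [h1]
  rw [intervalIntegral.integral_add (cf.intervalIntegrable _ _)
      (Continuous.intervalIntegrable (u := fun y => ε * ∫ s in (0:ℝ)..y, g s)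
        (continuous_const.mul cg) _ _), intervalIntegral.integral_const_mul]
  ring

theorem aux_pInvG_cont (f : ℝ → ℝ) (hf : Continuous f) : Continuous (pInvG f) := by
  unfold pInvG
  exact (aux_pInv_cont _ (hf.sub continuous_const)).add (continuous_const.mul continuous_id)

theorem aux_pInvG_add (v h : ℝ → ℝ) (hv : Continuous v) (hh : Continuous h)
    (hhm : (∫ x in (0:ℝ)..1, h x) = 0) (ε x : ℝ) :
    pInvG (fun s => v s + ε * h s) x = pInvG v x + ε * pInv h x := by
  have h1 : (∫ s in (0:ℝ)..1, (v s + ε * h s)) = ∫ s in (0:ℝ)..1, v s := by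
    rw [intervalIntegral.integral_add (hv.intervalIntegrable _ _)
      (Continuous.intervalIntegrable (u := fun s => ε * h s) (by fun_prop) _ _), intervalIntegral.integral_const_mul, hhm]
    simp
  unfold pInvG
  rw [h1]
  have := aux_pInv_add (fun s => v s - ∫ t in (0:ℝ)..1, v t) h (hv.sub continuous_const) hh ε x
  have e : (fun s => v s + ε * h s - ∫ t in (0:ℝ)..1, v t)
     = (fun s => (v s - ∫ t in (0:ℝ)..1, v t) + ε * h s) := by
    funext s; ring
  rw [e, this]; ring

theorem aux_rot (w : ℝ → ℝ) : Ksg w * Complex.exp (cSg w * Complex.I) = (‖Ksg w‖ : ℂ) := by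
  conv_lhs => rw [← Complex.norm_mul_exp_arg_mul_I (Ksg w)]
  rw [mul_assoc, ← Complex.exp_add]
  simp [cSg]

theorem aux_int (w : ℝ → ℝ) (hw : Continuous w) :
    (∫ x in (0:ℝ)..1, Real.cos (2 * pInvG w x + cSg w)) = ‖Ksg w‖ ∧
    (∫ x in (0:ℝ)..1, Real.sin (2 * pInvG w x + cSg w)) = 0 := by
  have hc := aux_pInvG_cont w hw
  have h1 : (∫ x in (0:ℝ)..1, Complex.exp (((2 * pInvG w x + cSg w : ℝ) : ℂ) * Complex.I))
      = (‖Ksg w‖ : ℂ) := by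
    rw [← aux_rot, Ksg, ← intervalIntegral.integral_mul_const]
    congr 1; funext x
    rw [← Complex.exp_add]
    congr 1; push_cast; ring
  have hi : IntervalIntegrable
      (fun x => Complex.exp (((2 * pInvG w x + cSg w : ℝ) : ℂ) * Complex.I)) volume 0 1 :=
    Continuous.intervalIntegrable (by fun_prop) _ _
  have hre := Complex.reCLM.intervalIntegral_comp_comm hi
  have him := Complex.imCLM.intervalIntegral_comp_comm hi
  rw [h1] at hre him
  simp only [Complex.reCLM_apply, Complex.imCLM_apply, Complex.exp_ofReal_mul_I_re,
    Complex.exp_ofReal_mul_I_im, Complex.ofReal_re, Complex.ofReal_im] at hre him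
  exact ⟨hre, him⟩

theorem aux_deriv (P Q : ℝ → ℝ) (hP : Continuous P) (hQ : Continuous Q) :
    HasDerivAt (fun ε : ℝ => ∫ x in (0:ℝ)..1,
        Complex.exp (2 * ((P x + ε * Q x : ℝ) : ℂ) * Complex.I))
      (∫ x in (0:ℝ)..1, Complex.exp (2 * ((P x + (0:ℝ) * Q x : ℝ) : ℂ) * Complex.I)
        * (2 * (Q x : ℂ) * Complex.I)) 0 := by
  refine (intervalIntegral.hasDerivAt_integral_of_dominated_loc_of_deriv_le
    (F := fun (ε : ℝ) (x : ℝ) => Complex.exp (2 * ((P x + ε * Q x : ℝ) : ℂ) * Complex.I))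
    (F' := fun (ε : ℝ) (x : ℝ) => Complex.exp (2 * ((P x + ε * Q x : ℝ) : ℂ) * Complex.I)
        * (2 * (Q x : ℂ) * Complex.I))
    (bound := fun x => 2 * |Q x|) (s := Set.univ) Filter.univ_mem ?_ ?_ ?_ ?_ ?_ ?_).2
  · exact Filter.Eventually.of_forall fun ε =>
      Continuous.aestronglyMeasurable (by fun_prop)
  · exact Continuous.intervalIntegrable (by fun_prop) _ _
  · exact Continuous.aestronglyMeasurable (by fun_prop)
  · refine Filter.Eventually.of_forall fun x _ ε _ => ?_
    have : (2 * ((P x + ε * Q x : ℝ) : ℂ) * Complex.I)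
      = ((2 * (P x + ε * Q x) : ℝ) : ℂ) * Complex.I := by push_cast; ring
    rw [norm_mul, this, Complex.norm_exp_ofReal_mul_I]
    simp
  · exact Continuous.intervalIntegrable (by fun_prop) _ _
  · refine Filter.Eventually.of_forall fun x _ ε _ => ?_
    have h0 : HasDerivAt (fun ε : ℝ => P x + ε * Q x) (Q x) ε := by
      simpa using ((hasDerivAt_id ε).mul_const (Q x)).const_add (P x)
    exact ((h0.ofReal_comp.const_mul (2:ℂ)).mul_const Complex.I).cexp

theorem aux_norm (K : ℝ → ℂ) (K' : ℂ) (h : HasDerivAt K K' 0) (c : ℝ) (h0 : K 0 ≠ 0)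
    (hc : K 0 * Complex.exp (c * Complex.I) = (‖K 0‖ : ℂ)) :
    HasDerivAt (fun ε => ‖K ε‖) ((K' * Complex.exp (c * Complex.I)).re) 0 := by
  have hn : ‖K 0‖ ≠ 0 := norm_ne_zero_iff.2 h0
  have h1 := h.norm_sq.sqrt (pow_ne_zero 2 hn)
  simp only [Real.sqrt_sq (norm_nonneg _)] at h1
  convert h1 using 1
  have hk : K 0 = ‖K 0‖ * Complex.exp ((-c : ℝ) * Complex.I) := by
    rw [← hc, mul_assoc, ← Complex.exp_add]; simp
  rw [eq_div_iff (by positivity), Complex.inner]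
  have : (starRingEnd ℂ) (K 0) = ‖K 0‖ * Complex.exp (c * Complex.I) := by
    conv_lhs => rw [hk]
    rw [map_mul, ← Complex.exp_conj]; simp
  have e2 : K' * (‖K 0‖ * Complex.exp (c * Complex.I))
      = (‖K 0‖ : ℂ) * (K' * Complex.exp (c * Complex.I)) := by ring
  rw [this, e2, Complex.re_ofReal_mul]
  ring

/-- (a) `sin (2 ∂ₓ⁻¹v + c_sg(v))` is continuous, 1-periodic, mean-zero;
(b) for small `ε` the quantity `Ksg (v + εh)` does not vanish; (c) the directional
derivative of `H_sg` at `v` in direction `h` is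
`½ ∫₀¹ (∂ₓ⁻¹ sin (2 ∂ₓ⁻¹v + c_sg(v)))(x) · h x dx`. -/
theorem hSg_gradient (k : ℤ) (v h : ℝ → ℝ)
    (hv : Continuous v) (hvp : Function.Periodic v 1)
    (hvm : (∫ x in (0:ℝ)..1, v x) = k * π)
    (hh : Continuous h) (hhp : Function.Periodic h 1)
    (hhm : (∫ x in (0:ℝ)..1, h x) = 0)
    (hK : Ksg v ≠ 0) :
    (Continuous (fun x => Real.sin (2 * pInvG v x + cSg v)) ∧
      Function.Periodic (fun x => Real.sin (2 * pInvG v x + cSg v)) 1 ∧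
      (∫ x in (0:ℝ)..1, Real.sin (2 * pInvG v x + cSg v)) = 0) ∧
    (∀ᶠ ε in nhds (0:ℝ), Ksg (fun x => v x + ε * h x) ≠ 0) ∧
    HasDerivAt (fun ε : ℝ => HSg (fun x => v x + ε * h x))
      ((1 / 2) * ∫ x in (0:ℝ)..1,
        pInv (fun y => Real.sin (2 * pInvG v y + cSg v)) x * h x) 0 := by
  have hPc := aux_pInvG_cont v hv
  have hQc := aux_pInv_cont h hh
  have hSc : Continuous (fun x => Real.sin (2 * pInvG v x + cSg v)) := by fun_prop
  have hSm := (aux_int v hv).2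
  have hKeq : ∀ ε : ℝ, Ksg (fun x => v x + ε * h x) = ∫ x in (0:ℝ)..1,
        Complex.exp (2 * ((pInvG v x + ε * pInv h x : ℝ) : ℂ) * Complex.I) := by
    intro ε
    unfold Ksg
    simp only [aux_pInvG_add v h hv hh hhm]
  have hKd := aux_deriv (pInvG v) (pInv h) hPc hQc
  simp only [← hKeq] at hKd
  have hK0 : Ksg (fun x => v x + 0 * h x) = Ksg v := by simp
  refine ⟨⟨hSc, ?_, hSm⟩, ?_, ?_⟩
  · have hstep : ∀ x, pInvG v (x + 1) = pInvG v x + k * π := by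
      intro x
      have hcont : Continuous (fun s => v s - ∫ t in (0:ℝ)..1, v t) := hv.sub continuous_const
      have hper : Function.Periodic (fun s => v s - ∫ t in (0:ℝ)..1, v t) 1 := by
        intro s; simp [hvp s]
      have e := hper.intervalIntegral_add_eq x 0
      have z : (∫ s in (0:ℝ)..(0+1), (v s - ∫ t in (0:ℝ)..1, v t)) = 0 := by
        rw [intervalIntegral.integral_sub (hv.intervalIntegrable _ _) (by simp)]
        simp
      have a := intervalIntegral.integral_add_adjacent_intervals
        (hcont.intervalIntegrable (μ := volume) 0 x) (hcont.intervalIntegrable x (x+1))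
      rw [e, z] at a
      unfold pInvG pInv
      rw [← a, hvm]; ring
    intro x
    show Real.sin (2 * pInvG v (x + 1) + cSg v) = _
    rw [hstep]
    have : 2 * (pInvG v x + k * π) + cSg v = (2 * pInvG v x + cSg v) + k * (2 * π) := by ring
    rw [this, Real.sin_add_int_mul_two_pi]
  · exact hKd.continuousAt.eventually_ne (by simpa using hK)
  · have hN := aux_norm _ _ hKd (cSg v) (by simpa using hK) (by simpa using aux_rot v)
    have hH : (fun ε : ℝ => HSg (fun x => v x + ε * h x))
        = fun ε => (1/4) * ‖Ksg (fun x => v x + ε * h x)‖ := by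
      funext ε
      rw [HSg, (aux_int (fun x => v x + ε * h x) (by fun_prop)).1]
    rw [hH]
    refine (hN.const_mul (1/4 : ℝ)).congr_deriv ?_
    have hre : ((∫ x in (0:ℝ)..1, Complex.exp (2 * ((pInvG v x + (0:ℝ) * pInv h x : ℝ) : ℂ)
        * Complex.I) * (2 * (pInv h x : ℂ) * Complex.I)) * Complex.exp (cSg v * Complex.I)).re
        = ∫ x in (0:ℝ)..1, (-2) * (pInv h x * Real.sin (2 * pInvG v x + cSg v)) := by
      rw [← intervalIntegral.integral_mul_const]
      have hi : IntervalIntegrable (fun x : ℝ => Complex.exp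
          (2 * ((pInvG v x + (0:ℝ) * pInv h x : ℝ) : ℂ)
          * Complex.I) * (2 * (pInv h x : ℂ) * Complex.I) * Complex.exp (cSg v * Complex.I))
          volume 0 1 := Continuous.intervalIntegrable (by fun_prop) _ _
      have := Complex.reCLM.intervalIntegral_comp_comm hi
      simp only [Complex.reCLM_apply] at this
      rw [← this]
      congr 1; funext x
      have e : Complex.exp (2 * ((pInvG v x + (0:ℝ) * pInv h x : ℝ) : ℂ)
          * Complex.I) * (2 * (pInv h x : ℂ) * Complex.I) * Complex.exp (cSg v * Complex.I)
          = ((2 * pInv h x : ℝ) : ℂ) * (Complex.I *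
            Complex.exp (((2 * pInvG v x + cSg v : ℝ) : ℂ) * Complex.I)) := by
        have : ((2 * pInvG v x + cSg v : ℝ) : ℂ) * Complex.I
          = 2 * ((pInvG v x + (0:ℝ) * pInv h x : ℝ) : ℂ) * Complex.I + cSg v * Complex.I := by
          push_cast; ring
        rw [this, Complex.exp_add]; push_cast; ring
      rw [e, Complex.re_ofReal_mul, Complex.I_mul_re, Complex.exp_ofReal_mul_I_im]
      ring
    rw [hre, intervalIntegral.integral_const_mul]
    have ibp := intervalIntegral.integral_mul_deriv_eq_deriv_mul
      (u := pInv (fun y => Real.sin (2 * pInvG v y + cSg v))) (v := pInv h) (a := 0) (b := 1)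
      (u' := fun y => Real.sin (2 * pInvG v y + cSg v)) (v' := h)
      (fun x _ => aux_pInv_deriv _ hSc x) (fun x _ => aux_pInv_deriv _ hh x)
      (hSc.intervalIntegrable _ _) (hh.intervalIntegrable _ _)
    rw [ibp, aux_pInv_one _ hSm, aux_pInv_one _ hhm]
    simp only [mul_comm (pInv h _)]
    ring
end

section
/- Fix k ∈ ℤ. Let u: ℝ × ℝ → ℝ be twice continuously differentiable with u(x+1,t) = u(x,t) + 2πk for all x,t, satisfying the sine-Gordon equation ∂ₓ∂ₜu(x,t) = sin(u(x,t)) for all x,t, and suppose ∫₀¹ cos(u(x,t)) dx > 0 for all t. Then for every t one has ∫₀¹ sin(u(x,t)) dx = 0; moreover, setting v(x,t) := ∂ₓu(x,t)/2, for every t the function v(·,t) is continuous, 1-periodic with ∫₀¹ v(x,t) dx = kπ and ∫₀¹ exp(2i(∂ₓ⁻¹v(·,t))(x)) dx ≠ 0, and one has u(x,t) ≡ 2(∂ₓ⁻¹v(·,t))(x) + c_sg(v(·,t)) (mod 2π) for all x,t, as well as ∂ₜv(x,t) = ½ sin( 2(∂ₓ⁻¹v(·,t))(x) + c_sg(v(·,t))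 ) for all x,t. -/
open MeasureTheory Real intervalIntegral

theorem aux_comp {E : Type*} [NormedAddCommGroup E] [NormedSpace ℝ E] (F : ℝ × ℝ → E)
    (L : ℝ × ℝ →L[ℝ] E) (g : ℝ → ℝ × ℝ) (g' : ℝ × ℝ) (s : ℝ)
    (hF : HasFDerivAt F L (g s)) (hg : HasDerivAt g g' s) :
    HasDerivAt (fun y => F (g y)) (L g') s :=
  hF.comp_hasDerivAt s hg

theorem aux_comp2 (F : ℝ × ℝ → (ℝ × ℝ →L[ℝ] ℝ))
    (L : ℝ × ℝ →L[ℝ] (ℝ × ℝ →L[ℝ] ℝ)) (g : ℝ → ℝ × ℝ) (g' e : ℝ × ℝ) (s : ℝ)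
    (hF : HasFDerivAt F L (g s)) (hg : HasDerivAt g g' s) :
    HasDerivAt (fun y => F (g y) e) (L g' e) s := by
  have h := (aux_comp F L g g' s hF hg).clm_apply (hasDerivAt_const s e)
  simpa using h

theorem aux_fixed (k : ℤ) (w w' : ℝ → ℝ) (hw : ∀ x, HasDerivAt w (w' x) x)
    (hc : Continuous w') (hch : ∀ x, w (x + 1) = w x + 2 * π * k)
    (hsin : (∫ x in (0:ℝ)..1, Real.sin (w x)) = 0)
    (hcos : 0 < ∫ x in (0:ℝ)..1, Real.cos (w x)) :
    Function.Periodic (fun x => w' x / 2) 1 ∧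
      (∫ x in (0:ℝ)..1, w' x / 2) = k * π ∧
      Ksg (fun y => w' y / 2) ≠ 0 ∧
      ∃ n : ℤ, ∀ x, w x = 2 * pInvG (fun y => w' y / 2) x
        + cSg (fun y => w' y / 2) + 2 * π * n := by
  have hI : ∀ a b, IntervalIntegrable (fun x => w' x / 2) volume a b := fun a b =>
    (hc.div_const 2).intervalIntegrable a b
  have hFTC : ∀ b, (∫ x in (0:ℝ)..b, w' x / 2) = w b / 2 - w 0 / 2 := fun b =>
    integral_eq_sub_of_hasDerivAt (f := fun x => w x / 2)
      (fun x _ => (hw x).div_const 2) (hI 0 b)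
  have hmean : (∫ x in (0:ℝ)..1, w' x / 2) = k * π := by
    rw [hFTC]
    have := hch 0
    rw [zero_add] at this
    rw [this]; ring
  have hcw : Continuous w := continuous_iff_continuousAt.2 fun x => (hw x).continuousAt
  obtain ⟨d, hd⟩ : ∃ d, ∀ x, 2 * pInvG (fun y => w' y / 2) x = w x - d := by
    refine ⟨w 0 + 2 * ∫ y in (0:ℝ)..1, ∫ s in (0:ℝ)..y, (w' s / 2 - k * π), fun x => ?_⟩
    unfold pInvG pInv
    simp only [hmean]
    rw [integral_sub (hI 0 x) (by simp), hFTC]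
    simp
    ring
  have hK : Ksg (fun y => w' y / 2)
      = ((∫ x in (0:ℝ)..1, Real.cos (w x) : ℝ) : ℂ) * Complex.exp (((-d : ℝ) : ℂ) * Complex.I) := by
    unfold Ksg
    have h1 : ∀ x, Complex.exp (2 * (pInvG (fun y => w' y / 2) x : ℂ) * Complex.I)
        = (((Real.cos (w x) : ℝ) : ℂ) + ((Real.sin (w x) : ℝ) : ℂ) * Complex.I)
          * Complex.exp (((-d : ℝ) : ℂ) * Complex.I) := by
      intro x
      have h2 : (2 * (pInvG (fun y => w' y / 2) x : ℂ)) = (w x : ℂ) + ((-d : ℝ) : ℂ) := by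
        have := hd x
        rw [sub_eq_add_neg] at this
        exact_mod_cast this
      rw [h2, add_mul, Complex.exp_add, Complex.exp_mul_I]
      push_cast
      rfl
    simp only [h1]
    rw [intervalIntegral.integral_mul_const, intervalIntegral.integral_add,
      intervalIntegral.integral_mul_const, intervalIntegral.integral_ofReal,
      intervalIntegral.integral_ofReal, hsin]
    · simp
    · exact (Complex.continuous_ofReal.comp (Real.continuous_cos.comp hcw)).intervalIntegrable _ _
    · exact ((Complex.continuous_ofReal.comp
        (Real.continuous_sin.comp hcw)).mul continuous_const).intervalIntegrable _ _
  have hR0 : ((∫ x in (0:ℝ)..1, Real.cos (w x) : ℝ) : ℂ) ≠ 0 := by exact_mod_cast hcos.ne'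
  refine ⟨?_, hmean, ?_, ?_⟩
  · intro x
    have h1 : HasDerivAt (fun y => w (y + 1)) (w' (x + 1)) x := (hw (x + 1)).comp_add_const x 1
    have h2 : HasDerivAt (fun y => w (y + 1)) (w' x) x := by
      simp only [hch]
      exact (hw x).add_const _
    simp only [h1.unique h2]
  · rw [hK]
    exact mul_ne_zero hR0 (Complex.exp_ne_zero _)
  · have hn : ‖Ksg (fun y => w' y / 2)‖ = ∫ x in (0:ℝ)..1, Real.cos (w x) := by
      rw [hK, norm_mul, Complex.norm_exp_ofReal_mul_I, mul_one, Complex.norm_real,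
        Real.norm_of_nonneg hcos.le]
    have h3 := Complex.norm_mul_exp_arg_mul_I (Ksg (fun y => w' y / 2))
    rw [hn] at h3
    have h4 := mul_left_cancel₀ hR0 (h3.trans hK)
    obtain ⟨n, hn⟩ := Complex.exp_eq_exp_iff_exists_int.1 h4
    have h5 : (Ksg (fun y => w' y / 2)).arg = -d + 2 * π * n := by
      have h6 : (((Ksg (fun y => w' y / 2)).arg : ℝ) : ℂ) = ((-d + 2 * π * n : ℝ) : ℂ) := by
        apply mul_right_cancel₀ Complex.I_ne_zero
        rw [hn]; push_cast; ring
      exact_mod_cast h6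
    refine ⟨n, fun x => ?_⟩
    rw [hd, cSg, h5]; ring

/-- a classical solution of sine-Gordon of topological charge `k` with
`∫₀¹ cos (u x t) dx > 0` for all `t` satisfies `∫₀¹ sin (u x t) dx = 0` for all `t`;
moreover `v(·,t) = ∂ₓu(·,t)/2` is continuous, 1-periodic of mean `kπ` with
`Ksg (v(·,t)) ≠ 0`, `u ≡ 2 ∂ₓ⁻¹v(·,t) + c_sg(v(·,t)) (mod 2π)` and
`∂ₜv = ½ sin (2 ∂ₓ⁻¹ v(·,t) + c_sg(v(·,t)))`. -/
theorem sineGordon_reduction_plus (k : ℤ) (u : ℝ → ℝ → ℝ)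
    (hreg : ContDiff ℝ 2 (Function.uncurry u))
    (hch : ∀ x t, u (x + 1) t = u x t + 2 * π * k)
    (hpde : ∀ x t, deriv (fun x' => deriv (fun t' => u x' t') t) x = Real.sin (u x t))
    (hcos : ∀ t, 0 < ∫ x in (0:ℝ)..1, Real.cos (u x t)) :
    (∀ t, (∫ x in (0:ℝ)..1, Real.sin (u x t)) = 0) ∧
    (∀ t, Continuous (fun x => deriv (fun x' => u x' t) x / 2) ∧
      Function.Periodic (fun x => deriv (fun x' => u x' t) x / 2) 1 ∧
      (∫ x in (0:ℝ)..1, deriv (fun x' => u x' t) x / 2) = k * π ∧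
      Ksg (fun y => deriv (fun x' => u x' t) y / 2) ≠ 0) ∧
    (∀ x t, ∃ n : ℤ, u x t = 2 * pInvG (fun y => deriv (fun x' => u x' t) y / 2) x
        + cSg (fun y => deriv (fun x' => u x' t) y / 2) + 2 * π * n) ∧
    (∀ x t, deriv (fun t' => deriv (fun x' => u x' t') x / 2) t
        = (1 / 2) * Real.sin (2 * pInvG (fun y => deriv (fun x' => u x' t) y / 2) x
            + cSg (fun y => deriv (fun x' => u x' t) y / 2))) := by
  have hD : ∀ p : ℝ × ℝ, HasFDerivAt (Function.uncurry u) (fderiv ℝ (Function.uncurry u) p) p :=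
    fun p => (hreg.differentiable (by norm_num) p).hasFDerivAt
  have hD1 : ContDiff ℝ 1 (fderiv ℝ (Function.uncurry u)) :=
    hreg.fderiv_right (by norm_num)
  have hDD : ∀ p : ℝ × ℝ, HasFDerivAt (fderiv ℝ (Function.uncurry u))
      (fderiv ℝ (fderiv ℝ (Function.uncurry u)) p) p :=
    fun p => (hD1.differentiable (by norm_num) p).hasFDerivAt
  have lx : ∀ x t : ℝ, HasDerivAt (fun x' : ℝ => (x', t)) ((1 : ℝ), (0 : ℝ)) x :=
    fun x t => (hasDerivAt_id x).prodMk (hasDerivAt_const x t)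
  have lt : ∀ x t : ℝ, HasDerivAt (fun t' : ℝ => (x, t')) ((0 : ℝ), (1 : ℝ)) t :=
    fun x t => (hasDerivAt_const t x).prodMk (hasDerivAt_id t)
  have hux : ∀ x t, HasDerivAt (fun x' => u x' t)
      (fderiv ℝ (Function.uncurry u) (x, t) (1, 0)) x :=
    fun x t => aux_comp _ _ (fun x' : ℝ => (x', t)) _ x (hD (x, t)) (lx x t)
  have hut : ∀ x t, HasDerivAt (fun t' => u x t')
      (fderiv ℝ (Function.uncurry u) (x, t) (0, 1)) t :=
    fun x t => aux_comp _ _ (fun t' : ℝ => (x, t')) _ t (hD (x, t)) (lt x t)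
  have hutx : ∀ x t, HasDerivAt (fun x' => fderiv ℝ (Function.uncurry u) (x', t) (0, 1))
      (fderiv ℝ (fderiv ℝ (Function.uncurry u)) (x, t) (1, 0) (0, 1)) x := by
    intro x t
    exact aux_comp2 _ _ (fun x' : ℝ => (x', t)) _ _ x (hDD (x, t)) (lx x t)
  have huxt : ∀ x t, HasDerivAt (fun t' => fderiv ℝ (Function.uncurry u) (x, t') (1, 0))
      (fderiv ℝ (fderiv ℝ (Function.uncurry u)) (x, t) (0, 1) (1, 0)) t := by
    intro x t
    exact aux_comp2 _ _ (fun t' : ℝ => (x, t')) _ _ t (hDD (x, t)) (lt x t)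
  have hsymm : ∀ x t, fderiv ℝ (fderiv ℝ (Function.uncurry u)) (x, t) (0, 1) (1, 0)
      = fderiv ℝ (fderiv ℝ (Function.uncurry u)) (x, t) (1, 0) (0, 1) := by
    intro x t
    exact (hreg.contDiffAt.isSymmSndFDerivAt (by simp)).eq _ _
  have hpde' : ∀ x t, fderiv ℝ (fderiv ℝ (Function.uncurry u)) (x, t) (1, 0) (0, 1)
      = Real.sin (u x t) := by
    intro x t
    rw [← hpde x t]
    simp only [fun x => (hut x t).deriv]
    exact (hutx x t).deriv.symm
  have hcu : ∀ t, Continuous (fun x => u x t) := fun t =>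
    continuous_iff_continuousAt.2 fun x => (hux x t).continuousAt
  have hsin : ∀ t, (∫ x in (0:ℝ)..1, Real.sin (u x t)) = 0 := by
    intro t
    rw [integral_eq_sub_of_hasDerivAt
      (f := fun x' => fderiv ℝ (Function.uncurry u) (x', t) (0, 1))
      (f' := fun x => Real.sin (u x t))
      (fun x _ => by have h := hutx x t; rwa [hpde'] at h)
      ((Real.continuous_sin.comp (hcu t)).intervalIntegrable _ _)]
    have h1 : HasDerivAt (fun t' => u 1 t')
        (fderiv ℝ (Function.uncurry u) (0, t) (0, 1)) t := by
      have h2 : (fun t' => u 1 t') = fun t' => u 0 t' + 2 * π * k := by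
        funext t'
        have := hch 0 t'
        rwa [zero_add] at this
      rw [h2]
      exact (hut 0 t).add_const _
    rw [(hut 1 t).unique h1, sub_self]
  have hcx : ∀ t, Continuous (fun x => fderiv ℝ (Function.uncurry u) (x, t) (1, 0)) := by
    intro t
    have := hD1.continuous
    fun_prop
  have key := fun t => aux_fixed k (fun x => u x t) _ (fun x => hux x t) (hcx t)
    (fun x => hch x t) (hsin t) (hcos t)
  have hder : ∀ x t, deriv (fun x' => u x' t) x
      = fderiv ℝ (Function.uncurry u) (x, t) (1, 0) := fun x t => (hux x t).deriv
  simp only [hder]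
  refine ⟨hsin, fun t => ⟨(hcx t).div_const 2, (key t).1, (key t).2.1, (key t).2.2.1⟩,
    fun x t => ?_, fun x t => ?_⟩
  · obtain ⟨n, hn⟩ := (key t).2.2.2
    exact ⟨n, hn x⟩
  · obtain ⟨n, hn⟩ := (key t).2.2.2
    rw [((huxt x t).div_const 2).deriv, hsymm, hpde', hn x, mul_comm (2 * π) (n : ℝ),
      Real.sin_add_int_mul_two_pi]
    ring
end

section
/- Fix k ∈ ℤ and let u: ℝ → ℝ be continuous of topological charge k with ∫₀¹ exp(i u(x)) dx = 0. Then the ℝ-linear map sending a continuous 1-periodic h: ℝ → ℝ to ∫₀¹ exp(i u(x)) h(x) dx ∈ ℂ is surjective onto ℂ; that is, for every z ∈ ℂ there exists a continuous 1-periodic h with ∫₀¹ exp(i u(x)) h(x) dx = z. -/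
open MeasureTheory Real intervalIntegral

lemma aux_split (u : ℝ → ℝ) (hu : Continuous u) (h : ℝ → ℝ) (hh : Continuous h) :
    (∫ x in (0:ℝ)..1, Complex.exp ((u x : ℂ) * Complex.I) * (h x : ℂ)) =
      ((∫ x in (0:ℝ)..1, Real.cos (u x) * h x : ℝ) : ℂ) +
      ((∫ x in (0:ℝ)..1, Real.sin (u x) * h x : ℝ) : ℂ) * Complex.I := by
  rw [← intervalIntegral.integral_ofReal, ← intervalIntegral.integral_ofReal,
    ← intervalIntegral.integral_mul_const, ← intervalIntegral.integral_add]
  · congr 1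
    funext x
    rw [Complex.exp_mul_I]
    push_cast
    ring
  · apply Continuous.intervalIntegrable
    fun_prop
  · apply Continuous.intervalIntegrable
    fun_prop

lemma aux_pos (u : ℝ → ℝ) (hu : Continuous u)
    (hc : ∫ x in (0:ℝ)..1, Real.cos (u x) = 0) (hs : ∫ x in (0:ℝ)..1, Real.sin (u x) = 0)
    (a b : ℝ) (hab : 0 < a ^ 2 + b ^ 2) :
    0 < ∫ x in (0:ℝ)..1, (a * Real.cos (u x) + b * Real.sin (u x)) ^ 2 := by
  have hg : Continuous fun x => a * Real.sin (u x) - b * Real.cos (u x) := by fun_prop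
  have hd : ∀ x, HasDerivAt (fun y => ∫ t in (0:ℝ)..y, (a * Real.sin (u t) - b * Real.cos (u t)))
      (a * Real.sin (u x) - b * Real.cos (u x)) x := fun x => hg.integral_hasStrictDerivAt 0 x |>.hasDerivAt
  have h1 : ∫ t in (0:ℝ)..1, (a * Real.sin (u t) - b * Real.cos (u t)) = 0 := by
    rw [intervalIntegral.integral_sub, intervalIntegral.integral_const_mul,
      intervalIntegral.integral_const_mul, hc, hs]
    · simp
    · apply Continuous.intervalIntegrable
      fun_prop
    · apply Continuous.intervalIntegrable
      fun_prop
  obtain ⟨c, hcm, hc0⟩ := exists_hasDerivAt_eq_zero (a := (0:ℝ)) (b := 1) one_pos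
    (fun x _ => (hd x).continuousAt.continuousWithinAt) (by simp [h1]) (fun x _ => hd x)
  apply intervalIntegral.integral_pos one_pos
  · apply Continuous.continuousOn
    fun_prop
  · intro x _
    positivity
  · refine ⟨c, ⟨hcm.1.le, hcm.2.le⟩, ?_⟩
    have := Real.sin_sq_add_cos_sq (u c)
    have h2 : (a * Real.cos (u c) + b * Real.sin (u c)) ^ 2 = a ^ 2 + b ^ 2 := by
      linear_combination (a ^ 2 + b ^ 2) * this - (a * Real.sin (u c) - b * Real.cos (u c)) * hc0
    rw [h2]
    exact hab

/-- if `u` is continuous of topological charge `k` with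
`∫₀¹ exp(i u) dx = 0`, then `h ↦ ∫₀¹ exp(i u x) h x dx` is surjective from continuous
1-periodic real functions onto `ℂ`. -/
theorem differential_K_surjective_on_Sing (k : ℤ) (u : ℝ → ℝ) (hu : Continuous u)
    (hch : ∀ x, u (x + 1) = u x + 2 * π * k)
    (hK : (∫ x in (0:ℝ)..1, Complex.exp ((u x : ℂ) * Complex.I)) = 0) :
    ∀ z : ℂ, ∃ h : ℝ → ℝ, Continuous h ∧ Function.Periodic h 1 ∧
      (∫ x in (0:ℝ)..1, Complex.exp ((u x : ℂ) * Complex.I) * (h x : ℂ)) = z := by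
  have hK' := aux_split u hu (fun _ => 1) continuous_const
  simp only [Complex.ofReal_one, mul_one, hK] at hK'
  have hc : ∫ x in (0:ℝ)..1, Real.cos (u x) = 0 := by
    have := congrArg Complex.re hK'
    simpa using this.symm
  have hs : ∫ x in (0:ℝ)..1, Real.sin (u x) = 0 := by
    have := congrArg Complex.im hK'
    simpa using this.symm
  have hpos := aux_pos u hu hc hs
  have hlin : ∀ (p q : ℝ) (f g : ℝ → ℝ), Continuous f → Continuous g →
      ∫ x in (0:ℝ)..1, (p * f x + q * g x) =
        p * (∫ x in (0:ℝ)..1, f x) + q * ∫ x in (0:ℝ)..1, g x := by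
    intro p q f g hf hg
    rw [intervalIntegral.integral_add, intervalIntegral.integral_const_mul,
      intervalIntegral.integral_const_mul]
    · exact (continuous_const.mul hf).intervalIntegrable _ _
    · exact (continuous_const.mul hg).intervalIntegrable _ _
  have e1 : ∀ a b : ℝ, ∫ x in (0:ℝ)..1, Real.cos (u x) * (a * Real.cos (u x) + b * Real.sin (u x))
      = a * (∫ x in (0:ℝ)..1, Real.cos (u x) ^ 2) +
        b * ∫ x in (0:ℝ)..1, Real.cos (u x) * Real.sin (u x) := by
    intro a b
    rw [← hlin _ _ _ _ (by fun_prop) (by fun_prop)]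
    congr 1; funext x; ring
  have e2 : ∀ a b : ℝ, ∫ x in (0:ℝ)..1, Real.sin (u x) * (a * Real.cos (u x) + b * Real.sin (u x))
      = a * (∫ x in (0:ℝ)..1, Real.cos (u x) * Real.sin (u x)) +
        b * ∫ x in (0:ℝ)..1, Real.sin (u x) ^ 2 := by
    intro a b
    rw [← hlin _ _ _ _ (by fun_prop) (by fun_prop)]
    congr 1; funext x; ring
  have e3 : ∀ a b : ℝ, ∫ x in (0:ℝ)..1, (a * Real.cos (u x) + b * Real.sin (u x)) ^ 2
      = a * (∫ x in (0:ℝ)..1, Real.cos (u x) * (a * Real.cos (u x) + b * Real.sin (u x))) +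
        b * ∫ x in (0:ℝ)..1, Real.sin (u x) * (a * Real.cos (u x) + b * Real.sin (u x)) := by
    intro a b
    rw [← hlin _ _ _ _ (by fun_prop) (by fun_prop)]
    congr 1; funext x; ring
  simp only [e3, e1, e2] at hpos
  generalize (∫ x in (0:ℝ)..1, Real.cos (u x) ^ 2) = A at *
  generalize (∫ x in (0:ℝ)..1, Real.cos (u x) * Real.sin (u x)) = B at *
  generalize (∫ x in (0:ℝ)..1, Real.sin (u x) ^ 2) = C at *
  have hA : 0 < A := by simpa using hpos 1 0 (by norm_num)
  have hD : A * C - B ^ 2 ≠ 0 := by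
    intro h0
    have := hpos B (-A) (by nlinarith [sq_nonneg B, mul_pos hA hA])
    have h3 : B * (B * A + -A * B) + -A * (B * B + -A * C) = A * (A * C - B ^ 2) := by ring
    rw [h3, h0] at this
    simp at this
  intro z
  refine ⟨fun x => ((C * z.re - B * z.im) / (A * C - B ^ 2)) * Real.cos (u x) +
    ((A * z.im - B * z.re) / (A * C - B ^ 2)) * Real.sin (u x), by fun_prop, ?_, ?_⟩
  · intro x
    have h2 : u x + 2 * π * k = u x + k * (2 * π) := by ring
    simp only [hch, h2, Real.cos_add_int_mul_two_pi, Real.sin_add_int_mul_two_pi]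
  · rw [aux_split u hu _ (by fun_prop), e1, e2]
    have r1 : (C * z.re - B * z.im) / (A * C - B ^ 2) * A +
        (A * z.im - B * z.re) / (A * C - B ^ 2) * B = z.re := by
      rw [div_mul_eq_mul_div, div_mul_eq_mul_div, ← add_div, div_eq_iff hD]
      ring
    have r2 : (C * z.re - B * z.im) / (A * C - B ^ 2) * B +
        (A * z.im - B * z.re) / (A * C - B ^ 2) * C = z.im := by
      rw [div_mul_eq_mul_div, div_mul_eq_mul_div, ← add_div, div_eq_iff hD]
      ring
    rw [r1, r2]
    exact Complex.re_add_im z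
end

section
/- Fix k ∈ ℤ and let u: ℝ → ℝ be continuous of topological charge k with ∫₀¹ exp(i u(x)) dx = 0 (equivalently ∫₀¹ sin(u) = 0 and ∫₀¹ cos(u) = 0). Then the oscillation of u on [0,1] is at least π: sup_{0 ≤ x, y ≤ 1} |u(x) − u(y)| ≥ π. -/
open MeasureTheory Real intervalIntegral

/-- if `u` is continuous of topological charge `k` with
`∫₀¹ exp(i u x) dx = 0`, then the oscillation of `u` on `[0,1]` is at least `π`. -/
theorem oscillation_on_Sing (k : ℤ) (u : ℝ → ℝ) (hu : Continuous u)
    (hch : ∀ x, u (x + 1) = u x + 2 * π * k)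
    (hK : (∫ x in (0:ℝ)..1, Complex.exp ((u x : ℂ) * Complex.I)) = 0) :
    π ≤ sSup {d : ℝ | ∃ x ∈ Set.Icc (0:ℝ) 1, ∃ y ∈ Set.Icc (0:ℝ) 1, d = |u x - u y|} := by
  obtain ⟨a, ha, hamin⟩ := isCompact_Icc.exists_isMinOn (Set.nonempty_Icc.2 (zero_le_one' ℝ))
    hu.continuousOn
  obtain ⟨b, hb, hbmax⟩ := isCompact_Icc.exists_isMaxOn (Set.nonempty_Icc.2 (zero_le_one' ℝ))
    hu.continuousOn
  have hmin : ∀ x ∈ Set.Icc (0:ℝ) 1, u a ≤ u x := fun x hx => hamin hx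
  have hmax : ∀ x ∈ Set.Icc (0:ℝ) 1, u x ≤ u b := fun x hx => hbmax hx
  have hbdd : BddAbove {d : ℝ | ∃ x ∈ Set.Icc (0:ℝ) 1, ∃ y ∈ Set.Icc (0:ℝ) 1,
      d = |u x - u y|} := by
    refine ⟨u b - u a, ?_⟩
    rintro d ⟨x, hx, y, hy, rfl⟩
    rw [abs_le]
    constructor <;> linarith [hmin x hx, hmin y hy, hmax x hx, hmax y hy]
  have hle := le_csSup hbdd ⟨b, hb, a, ha, rfl⟩
  refine le_trans ?_ hle
  refine le_trans ?_ (le_abs_self _)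
  by_contra hlt
  push Not at hlt
  set c : ℝ := (u a + u b) / 2 with hc
  have hpos : 0 < ∫ x in (0:ℝ)..1, Real.cos (u x - c) := by
    apply intervalIntegral.intervalIntegral_pos_of_pos_on
    · exact (by fun_prop : Continuous fun x => Real.cos (u x - c)).intervalIntegrable _ _
    · intro x hx
      have hx' := Set.Ioo_subset_Icc_self hx
      apply Real.cos_pos_of_mem_Ioo
      constructor <;> linarith [hmin x hx', hmax x hx']
    · norm_num
  have hzero : (∫ x in (0:ℝ)..1, Complex.exp (((u x - c : ℝ) : ℂ) * Complex.I)) = 0 := by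
    have : ∀ x, Complex.exp (((u x - c : ℝ) : ℂ) * Complex.I)
        = Complex.exp (-(c : ℂ) * Complex.I) * Complex.exp ((u x : ℂ) * Complex.I) := by
      intro x
      rw [← Complex.exp_add]
      congr 1
      push_cast
      ring
    simp_rw [this]
    rw [intervalIntegral.integral_const_mul, hK, mul_zero]
  have hint : IntervalIntegrable (fun x => Complex.exp (((u x - c : ℝ) : ℂ) * Complex.I))
      volume 0 1 := Continuous.intervalIntegrable (by fun_prop) _ _
  have hre := Complex.reCLM.intervalIntegral_comp_comm hint
  rw [hzero] at hre
  simp only [Complex.reCLM_apply, Complex.exp_ofReal_mul_I_re, Complex.zero_re] at hre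
  linarith
end

section
/- Fix k ∈ ℤ, let I ⊆ ℝ be an open interval, and let u: ℝ × I → ℝ be twice continuously differentiable with u(x+1,t) = u(x,t) + 2πk for all x ∈ ℝ, t ∈ I, satisfying the sine-Gordon equation ∂ₓ∂ₜu(x,t) = sin(u(x,t)) for all x,t. Then for every t ∈ I: (a) ∫₀¹ sin(u(x,t)) dx = 0; and (b) with m(t) := ∫₀¹ u(x,t) dx, the function m is differentiable and K₁(u(·,t)) + m′(t) · ∫₀¹ cos(u(x,t)) dx = 0. -/
open MeasureTheory Real intervalIntegral

/-- `K₁(u) = ∫₀¹ cos (u x) · (∂ₓ⁻¹ (sin ∘ u))(x) dx`. -/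
noncomputable def K1 (u : ℝ → ℝ) : ℝ :=
  ∫ x in (0:ℝ)..1, Real.cos (u x) * pInv (fun y => Real.sin (u y)) x

lemma aux_deriv_s15 (I : Set ℝ) (hI : IsOpen I) (F F' : ℝ → ℝ → ℝ)
    (hF : ContinuousOn (Function.uncurry F) (Set.univ ×ˢ I))
    (hF' : ContinuousOn (Function.uncurry F') (Set.univ ×ˢ I))
    (hd : ∀ x, ∀ t ∈ I, HasDerivAt (fun t' => F x t') (F' x t) t) (t : ℝ) (ht : t ∈ I) :
    HasDerivAt (fun t' => ∫ x in (0:ℝ)..1, F x t') (∫ x in (0:ℝ)..1, F' x t) t := by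
  obtain ⟨ε, hε, hb⟩ := Metric.nhds_basis_closedBall.mem_iff.1 (hI.mem_nhds ht)
  have slice : ∀ G : ℝ → ℝ → ℝ, ContinuousOn (Function.uncurry G) (Set.univ ×ˢ I) →
      ∀ s ∈ I, Continuous (fun x => G x s) := by
    intro G hG s hs
    rw [← continuousOn_univ]
    exact hG.comp (f := fun x : ℝ => (x, s)) (by fun_prop) (fun x _ => ⟨trivial, hs⟩)
  have hK : IsCompact (Set.Icc (0:ℝ) 1 ×ˢ Metric.closedBall t ε) :=
    isCompact_Icc.prod (isCompact_closedBall t ε)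
  obtain ⟨C, hC⟩ := hK.exists_bound_of_continuousOn
    (hF'.mono (Set.prod_mono (Set.subset_univ _) hb))
  refine (intervalIntegral.hasDerivAt_integral_of_dominated_loc_of_deriv_le
    (F := fun t' x => F x t') (F' := fun t' x => F' x t') (bound := fun _ => C)
    (s := Metric.closedBall t ε) (Metric.closedBall_mem_nhds t hε) ?_ ?_ ?_ ?_ ?_ ?_).2
  · filter_upwards [hI.mem_nhds ht] with s hs
    exact (slice F hF s hs).aestronglyMeasurable
  · exact (slice F hF t ht).intervalIntegrable _ _
  · exact (slice F' hF' t ht).aestronglyMeasurable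
  · refine Filter.Eventually.of_forall fun x hx s hs => ?_
    rw [Set.uIoc_of_le zero_le_one] at hx
    exact hC (x, s) ⟨⟨hx.1.le, hx.2⟩, hs⟩
  · exact intervalIntegrable_const
  · exact Filter.Eventually.of_forall fun x hx s hs => hd x s (hb hs)

/-- for a classical charge-`k` solution of sine-Gordon on `ℝ × I`, `I` an
open interval, one has `∫₀¹ sin (u x t) dx = 0` for all `t ∈ I`, the mean
`m(t) = ∫₀¹ u x t dx` is differentiable, and `K₁(u(·,t)) + m'(t)·∫₀¹ cos (u x t) dx = 0`. -/
theorem constraint_on_solutions (k : ℤ) (I : Set ℝ) (hIopen : IsOpen I)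
    (hIconn : I.OrdConnected) (u : ℝ → ℝ → ℝ)
    (hreg : ContDiffOn ℝ 2 (Function.uncurry u) (Set.univ ×ˢ I))
    (hch : ∀ x : ℝ, ∀ t ∈ I, u (x + 1) t = u x t + 2 * π * k)
    (hpde : ∀ x : ℝ, ∀ t ∈ I,
      deriv (fun x' => deriv (fun t' => u x' t') t) x = Real.sin (u x t)) :
    ∀ t ∈ I,
      (∫ x in (0:ℝ)..1, Real.sin (u x t)) = 0 ∧
      DifferentiableAt ℝ (fun t' => ∫ x in (0:ℝ)..1, u x t') t ∧
      K1 (fun x => u x t)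
        + deriv (fun t' => ∫ x in (0:ℝ)..1, u x t') t
          * (∫ x in (0:ℝ)..1, Real.cos (u x t)) = 0 := by
  have hO : IsOpen ((Set.univ : Set ℝ) ×ˢ I) := isOpen_univ.prod hIopen
  set v : ℝ → ℝ → ℝ := fun x t => fderiv ℝ (Function.uncurry u) (x, t) (0, 1) with hv
  have hvd : ∀ x, ∀ t ∈ I, HasDerivAt (fun t' => u x t') (v x t) t := by
    intro x t ht
    have h1 : HasFDerivAt (Function.uncurry u) (fderiv ℝ (Function.uncurry u) (x, t)) (x, t) :=
      ((hreg.differentiableOn (by norm_num)).differentiableAt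
        (hO.mem_nhds ⟨trivial, ht⟩)).hasFDerivAt
    have h2 : HasDerivAt (fun t' : ℝ => (x, t')) ((0:ℝ), (1:ℝ)) t :=
      (hasDerivAt_const t x).prodMk (hasDerivAt_id t)
    exact h1.comp_hasDerivAt t h2
  have hvC : ContDiffOn ℝ 1 (Function.uncurry v) (Set.univ ×ˢ I) := by
    have := (hreg.fderiv_of_isOpen hO (m := 1) (by norm_num)).clm_apply
      (contDiffOn_const (c := ((0:ℝ), (1:ℝ))))
    exact this
  have hvx : ∀ x, ∀ t ∈ I, HasDerivAt (fun x' => v x' t) (Real.sin (u x t)) x := by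
    intro x t ht
    have e : (fun x' => deriv (fun t' => u x' t') t) = fun x' => v x' t := by
      funext x'
      exact (hvd x' t ht).deriv
    have hp := hpde x t ht
    rw [e] at hp
    rw [← hp]
    refine DifferentiableAt.hasDerivAt ?_
    have h1 : DifferentiableAt ℝ (Function.uncurry v) (x, t) :=
      (hvC.differentiableOn (by norm_num)).differentiableAt (hO.mem_nhds ⟨trivial, ht⟩)
    exact h1.comp (f := fun x' : ℝ => (x', t)) x (by fun_prop)
  have hper : ∀ t ∈ I, v 1 t = v 0 t := by
    intro t ht
    have h1 := hvd 1 t ht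
    have h0 := (hvd 0 t ht).add_const (2 * π * k)
    refine h1.unique (h0.congr_of_eventuallyEq ?_)
    filter_upwards [hIopen.mem_nhds ht] with s hs
    have := hch 0 s hs
    rwa [zero_add] at this
  have hslice : ∀ G : ℝ → ℝ → ℝ, ContinuousOn (Function.uncurry G) (Set.univ ×ˢ I) →
      ∀ s ∈ I, Continuous (fun x => G x s) := by
    intro G hG s hs
    rw [← continuousOn_univ]
    exact hG.comp (f := fun x : ℝ => (x, s)) (by fun_prop) (fun x _ => ⟨trivial, hs⟩)
  have huc := hreg.continuousOn
  have hvc := hvC.continuousOn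
  have hint : ∀ t ∈ I, ∀ x, (∫ s in (0:ℝ)..x, Real.sin (u s t)) = v x t - v 0 t := by
    intro t ht x
    exact intervalIntegral.integral_eq_sub_of_hasDerivAt (fun y _ => hvx y t ht)
      ((Real.continuous_sin.comp (hslice u huc t ht)).intervalIntegrable _ _)
  have hzero : ∀ t ∈ I, (∫ x in (0:ℝ)..1, Real.sin (u x t)) = 0 := by
    intro t ht
    rw [hint t ht, hper t ht, sub_self]
  intro t ht
  have hm := aux_deriv_s15 I hIopen u v huc hvc hvd t ht
  have hs := aux_deriv_s15 I hIopen (fun x t => Real.sin (u x t))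
    (fun x t => Real.cos (u x t) * v x t)
    (Real.continuous_sin.comp_continuousOn huc)
    ((Real.continuous_cos.comp_continuousOn huc).mul hvc)
    (fun x t ht => (hvd x t ht).sin) t ht
  have hs0 : (∫ x in (0:ℝ)..1, Real.cos (u x t) * v x t) = 0 := by
    refine hs.unique ((hasDerivAt_const t (0:ℝ)).congr_of_eventuallyEq ?_)
    filter_upwards [hIopen.mem_nhds ht] with s hs
    exact hzero s hs
  refine ⟨hzero t ht, hm.differentiableAt, ?_⟩
  rw [hm.deriv]
  have hvt := hslice v hvc t ht
  have hct : Continuous (fun x => Real.cos (u x t)) :=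
    Real.continuous_cos.comp (hslice u huc t ht)
  have hp : ∀ x, pInv (fun y => Real.sin (u y t)) x = v x t - ∫ x in (0:ℝ)..1, v x t := by
    intro x
    simp only [pInv, hint t ht]
    rw [intervalIntegral.integral_sub (hvt.intervalIntegrable _ _) intervalIntegrable_const]
    simp
  simp only [K1, hp, mul_sub]
  have h1 : IntervalIntegrable (fun x => Real.cos (u x t) * v x t) volume 0 1 :=
    (hct.mul hvt).intervalIntegrable _ _
  have h2 : IntervalIntegrable (fun x => Real.cos (u x t) * ∫ x in (0:ℝ)..1, v x t) volume 0 1 :=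
    (hct.mul continuous_const).intervalIntegrable _ _
  rw [intervalIntegral.integral_sub h1 h2, hs0, intervalIntegral.integral_mul_const]
  ring
end

section
/- Fix k ∈ ℤ and T > 0. Let u: ℝ × [0,T) → ℝ be such that u and its partial derivatives ∂ₓu, ∂ₜu, ∂ₓ∂ₜu, ∂ₜ∂ₓu exist and are continuous (derivatives in t one-sided at t = 0), with ∂ₓ∂ₜu = ∂ₜ∂ₓu, u(x+1,t) = u(x,t) + 2πk for all x,t, and ∂ₓ∂ₜu(x,t) = sin(u(x,t)) for all x,t. If the initial datum u₀ := u(·,0) satisfies ∫₀¹ cos(u₀(x)) dx = 0, then K₁(u₀) = 0. -/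
open MeasureTheory Real intervalIntegral

/-- A classical solution of the sine-Gordon equation of topological charge `k` on
`ℝ × [0,T)`: `u` together with its partial derivatives `∂ₓu`, `∂ₜu`, `∂ₓ∂ₜu`, `∂ₜ∂ₓu`
(the `t`-derivatives taken one-sided at `t = 0`, i.e. within `[0,T)`) exist and are
continuous, the mixed partial derivatives agree, `u(x+1,t) = u(x,t) + 2πk`, and
`∂ₓ∂ₜu = sin u`. -/
def IsSGSolution (k : ℤ) (T : ℝ) (u : ℝ → ℝ → ℝ) : Prop :=
  ∃ ux ut uxt utx : ℝ → ℝ → ℝ,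
    ContinuousOn (fun p : ℝ × ℝ => u p.1 p.2) (Set.univ ×ˢ Set.Ico 0 T) ∧
    (∀ x : ℝ, ∀ t ∈ Set.Ico (0:ℝ) T, HasDerivAt (fun x' => u x' t) (ux x t) x) ∧
    ContinuousOn (fun p : ℝ × ℝ => ux p.1 p.2) (Set.univ ×ˢ Set.Ico 0 T) ∧
    (∀ x : ℝ, ∀ t ∈ Set.Ico (0:ℝ) T,
      HasDerivWithinAt (fun t' => u x t') (ut x t) (Set.Ico 0 T) t) ∧
    ContinuousOn (fun p : ℝ × ℝ => ut p.1 p.2) (Set.univ ×ˢ Set.Ico 0 T) ∧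
    (∀ x : ℝ, ∀ t ∈ Set.Ico (0:ℝ) T, HasDerivAt (fun x' => ut x' t) (uxt x t) x) ∧
    ContinuousOn (fun p : ℝ × ℝ => uxt p.1 p.2) (Set.univ ×ˢ Set.Ico 0 T) ∧
    (∀ x : ℝ, ∀ t ∈ Set.Ico (0:ℝ) T,
      HasDerivWithinAt (fun t' => ux x t') (utx x t) (Set.Ico 0 T) t) ∧
    ContinuousOn (fun p : ℝ × ℝ => utx p.1 p.2) (Set.univ ×ˢ Set.Ico 0 T) ∧
    (∀ x : ℝ, ∀ t ∈ Set.Ico (0:ℝ) T, uxt x t = utx x t) ∧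
    (∀ x : ℝ, ∀ t ∈ Set.Ico (0:ℝ) T, u (x + 1) t = u x t + 2 * π * k) ∧
    (∀ x : ℝ, ∀ t ∈ Set.Ico (0:ℝ) T, uxt x t = Real.sin (u x t))

set_option maxHeartbeats 1000000 in
/-- if `u` is a classical charge-`k` solution of sine-Gordon on `ℝ × [0,T)`
with initial datum `u₀ = u(·,0)` satisfying `∫₀¹ cos (u₀ x) dx = 0`, then `K₁(u₀) = 0`. -/
theorem necessary_condition_on_Sing (k : ℤ) (T : ℝ) (hT : 0 < T) (u : ℝ → ℝ → ℝ)
    (hsol : IsSGSolution k T u)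
    (hcos : (∫ x in (0:ℝ)..1, Real.cos (u x 0)) = 0) :
    K1 (fun x => u x 0) = 0 := by
  obtain ⟨ux, ut, uxt, utx, hu, hux, -, hut, hutc, huxt, -, -, -, -, hper, heq⟩ := hsol
  have h0 : (0:ℝ) ∈ Set.Ico (0:ℝ) T := ⟨le_refl _, hT⟩
  have cu : ∀ t ∈ Set.Ico (0:ℝ) T, Continuous (fun x => u x t) := fun t ht =>
    continuous_iff_continuousAt.2 fun x => (hux x t ht).continuousAt
  have cut : ∀ t ∈ Set.Ico (0:ℝ) T, Continuous (fun x => ut x t) := fun t ht =>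
    continuous_iff_continuousAt.2 fun x => (huxt x t ht).continuousAt
  have cs : ∀ t ∈ Set.Ico (0:ℝ) T, Continuous (fun x => Real.sin (u x t)) := fun t ht =>
    Real.continuous_sin.comp (cu t ht)
  have ftc : ∀ t ∈ Set.Ico (0:ℝ) T, ∀ x, ∫ s in (0:ℝ)..x, Real.sin (u s t) = ut x t - ut 0 t := by
    intro t ht x
    refine integral_eq_sub_of_hasDerivAt (f := fun x => ut x t) (fun y _ => ?_)
      ((cs t ht).intervalIntegrable _ _)
    rw [← heq y t ht]
    exact huxt y t ht
  have utper : ∀ t ∈ Set.Ico (0:ℝ) T, ut 1 t = ut 0 t := by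
    intro t ht
    have h1 := hut 1 t ht
    have h2 := (hut 0 t ht).add_const (2 * π * k)
    have h3 := h2.congr (f₁ := fun t' => u 1 t')
      (fun s hs => by have := hper 0 s hs; rw [zero_add] at this; exact this)
      (by have := hper 0 t ht; rw [zero_add] at this; exact this)
    exact (uniqueDiffOn_Ico 0 T t ht).eq_deriv _ h1 h3
  have S0 : ∀ t ∈ Set.Ico (0:ℝ) T, ∫ x in (0:ℝ)..1, Real.sin (u x t) = 0 := by
    intro t ht
    rw [ftc t ht, utper t ht, sub_self]
  -- bound
  have hcomp : IsCompact (Set.Icc (0:ℝ) 1 ×ˢ Set.Icc (0:ℝ) (T/2)) := isCompact_Icc.prod isCompact_Icc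
  obtain ⟨C, hC⟩ := hcomp.exists_bound_of_continuousOn
    (hutc.mono (Set.prod_mono (Set.subset_univ _)
      (fun s hs => ⟨hs.1, by have := hs.2; linarith⟩)))
  have hsd : ∀ x, ∀ t ∈ Set.Ico (0:ℝ) T, HasDerivWithinAt (fun t' => Real.sin (u x t'))
      (Real.cos (u x t) * ut x t) (Set.Ico 0 T) t := fun x t ht => (hut x t ht).sin
  have key : ∫ x in (0:ℝ)..1, Real.cos (u x 0) * ut x 0 = 0 := by
    have lim : Filter.Tendsto (fun t : ℝ => ∫ x in (0:ℝ)..1,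
        t⁻¹ * (Real.sin (u x t) - Real.sin (u x 0))) (nhdsWithin 0 (Set.Ioo 0 (T/2)))
        (nhds (∫ x in (0:ℝ)..1, Real.cos (u x 0) * ut x 0)) := by
      refine intervalIntegral.tendsto_integral_filter_of_dominated_convergence (fun _ => C) ?_ ?_ ?_ ?_
      · filter_upwards [self_mem_nhdsWithin] with t ht
        have ht' : t ∈ Set.Ico (0:ℝ) T := ⟨ht.1.le, by linarith [ht.2]⟩
        exact (continuous_const.mul ((cs t ht').sub (cs 0 h0))).aestronglyMeasurable
      · filter_upwards [self_mem_nhdsWithin] with t ht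
        refine Filter.Eventually.of_forall fun x hx => ?_
        rw [Set.uIoc_of_le zero_le_one] at hx
        have hb := (convex_Icc (0:ℝ) (T/2)).norm_image_sub_le_of_norm_hasDerivWithin_le
          (f := fun t' => Real.sin (u x t')) (f' := fun t => Real.cos (u x t) * ut x t) (C := C)
          (x := 0) (y := t)
          (fun s hs => (hsd x s ⟨hs.1, by linarith [hs.2]⟩).mono
            (fun r hr => ⟨hr.1, by linarith [hr.2]⟩))
          (fun s hs => by
            have h1 := hC (x, s) ⟨⟨hx.1.le, hx.2⟩, hs⟩
            rw [norm_mul]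
            calc _ ≤ 1 * ‖ut x s‖ := mul_le_mul_of_nonneg_right (Real.abs_cos_le_one _) (norm_nonneg _)
              _ ≤ C := by rw [one_mul]; exact h1)
          ⟨le_refl _, by linarith⟩ ⟨ht.1.le, ht.2.le⟩
        rw [norm_mul, norm_inv, Real.norm_of_nonneg ht.1.le, inv_mul_le_iff₀ ht.1]
        rw [sub_zero, Real.norm_of_nonneg ht.1.le] at hb
        linarith
      · exact intervalIntegrable_const
      · refine Filter.Eventually.of_forall fun x _ => ?_
        have hsub : Set.Ioo (0:ℝ) (T/2) ⊆ Set.Ico 0 T :=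
          fun r hr => ⟨hr.1.le, by linarith [hr.2]⟩
        have h := (hsd x 0 h0).mono hsub
        rw [hasDerivWithinAt_iff_tendsto_slope' (by simp)] at h
        refine h.congr fun t => ?_
        simp [slope_def_field, div_eq_inv_mul]
    have z : Filter.Tendsto (fun t : ℝ => ∫ x in (0:ℝ)..1,
        t⁻¹ * (Real.sin (u x t) - Real.sin (u x 0))) (nhdsWithin 0 (Set.Ioo 0 (T/2))) (nhds 0) := by
      refine tendsto_const_nhds.congr' ?_
      filter_upwards [self_mem_nhdsWithin] with t ht
      have ht' : t ∈ Set.Ico (0:ℝ) T := ⟨ht.1.le, by linarith [ht.2]⟩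
      rw [intervalIntegral.integral_const_mul, intervalIntegral.integral_sub
        ((cs t ht').intervalIntegrable _ _) ((cs 0 h0).intervalIntegrable _ _), S0 t ht', S0 0 h0]
      simp
    have : (nhdsWithin (0:ℝ) (Set.Ioo 0 (T/2))).NeBot := by
      rw [nhdsWithin_Ioo_eq_nhdsGT (by linarith)]
      infer_instance
    exact tendsto_nhds_unique lim z
  have cc : Continuous (fun x => Real.cos (u x 0)) := Real.continuous_cos.comp (cu 0 h0)
  unfold K1 pInv
  simp only [ftc 0 h0]
  generalize (∫ y in (0:ℝ)..1, (ut y 0 - ut 0 0)) = c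
  have e : ∀ x, Real.cos (u x 0) * (ut x 0 - ut 0 0 - c)
      = Real.cos (u x 0) * ut x 0 - Real.cos (u x 0) * (ut 0 0 + c) := fun x => by ring
  simp only [e]
  have i1 : IntervalIntegrable (fun x => Real.cos (u x 0) * ut x 0) volume 0 1 :=
    (cc.mul (cut 0 h0)).intervalIntegrable _ _
  have i2 : IntervalIntegrable (fun x => Real.cos (u x 0) * (ut 0 0 + c)) volume 0 1 :=
    (cc.mul continuous_const).intervalIntegrable _ _
  rw [intervalIntegral.integral_sub i1 i2, intervalIntegral.integral_mul_const, key, hcos]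
  simp
end

section
/- Fix k ∈ ℤ and let u₀: ℝ → ℝ be continuously differentiable of topological charge k with ∫₀¹ exp(i u₀(x)) dx = 0 and K₁(u₀) ≠ 0. Then for every T > 0 there exists no function u: ℝ × [0,T) → ℝ such that u and its partial derivatives ∂ₓu, ∂ₜu, ∂ₓ∂ₜu, ∂ₜ∂ₓu exist and are continuous (derivatives in t one-sided at t = 0) with ∂ₓ∂ₜu = ∂ₜ∂ₓu, u(x+1,t) = u(x,t) + 2πk for all x,t, u(x,0) = u₀(x) for all x, and ∂ₓ∂ₜu(x,t) = sin(u(x,t)) for all x,t. -/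
open MeasureTheory Real intervalIntegral

/-- if `u₀` is C¹ of topological charge `k` with `∫₀¹ exp(i u₀ x) dx = 0`
and `K₁(u₀) ≠ 0`, then for every `T > 0` there is no classical charge-`k` solution of
sine-Gordon on `ℝ × [0,T)` with initial datum `u₀`. -/
theorem no_solution_on_Sing (k : ℤ) (u₀ : ℝ → ℝ)
    (hu₀ : ContDiff ℝ 1 u₀)
    (hch : ∀ x, u₀ (x + 1) = u₀ x + 2 * π * k)
    (hK : (∫ x in (0:ℝ)..1, Complex.exp ((u₀ x : ℂ) * Complex.I)) = 0)
    (hK1 : K1 u₀ ≠ 0) :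
    ∀ T : ℝ, 0 < T → ¬ ∃ u : ℝ → ℝ → ℝ, IsSGSolution k T u ∧ ∀ x, u x 0 = u₀ x := by
  rintro T hT ⟨u, ⟨ux, ut, uxt, utx, hu, hux, -, hut, hutc, huxt, -, -, -, -, hper, heq⟩, hu0⟩
  have hS : (0:ℝ) < T / 2 := by linarith
  have h0 : (0:ℝ) ∈ Set.Ico 0 T := ⟨le_rfl, hT⟩
  have hsub : Set.Icc (0:ℝ) (T/2) ⊆ Set.Ico 0 T := fun t ht => ⟨ht.1, by linarith [ht.2]⟩
  have hcu : ∀ t ∈ Set.Ico (0:ℝ) T, Continuous (fun x => u x t) := fun t ht =>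
    continuous_iff_continuousAt.2 fun x => (hux x t ht).continuousAt
  have hcut : ∀ t ∈ Set.Ico (0:ℝ) T, Continuous (fun x => ut x t) := fun t ht =>
    continuous_iff_continuousAt.2 fun x => (huxt x t ht).continuousAt
  have hutint : ∀ t ∈ Set.Ico (0:ℝ) T, ∀ x, ∫ s in (0:ℝ)..x, Real.sin (u s t) = ut x t - ut 0 t := by
    intro t ht x
    refine integral_eq_sub_of_hasDerivAt (f := fun x => ut x t) (fun y _ => ?_) ?_
    · rw [← heq y t ht]; exact huxt y t ht
    · exact (Real.continuous_sin.comp (hcu t ht)).intervalIntegrable _ _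
  have hutper : ∀ t ∈ Set.Ico (0:ℝ) T, ut 1 t = ut 0 t := by
    intro t ht
    have hun : UniqueDiffWithinAt ℝ (Set.Ico (0:ℝ) T) t := uniqueDiffOn_Ico 0 T t ht
    have h1 := hut 1 t ht
    have h2 : HasDerivWithinAt (fun t' => u 1 t') (ut 0 t) (Set.Ico 0 T) t := by
      refine ((hut 0 t ht).add_const (2 * π * k)).congr (fun s hs => ?_) ?_
      · simpa using hper 0 s hs
      · simpa using hper 0 t ht
    exact hun.eq_deriv _ h1 h2
  have hsin0 : ∀ t ∈ Set.Ico (0:ℝ) T, ∫ s in (0:ℝ)..1, Real.sin (u s t) = 0 := by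
    intro t ht
    rw [hutint t ht 1, hutper t ht, sub_self]
  have hcos0 : ∫ x in (0:ℝ)..1, Real.cos (u x 0) = 0 := by
    have hi : IntervalIntegrable (fun x => Complex.exp ((u₀ x : ℂ) * Complex.I)) volume 0 1 := by
      apply Continuous.intervalIntegrable
      have := hu₀.continuous
      fun_prop
    have h := Complex.reCLM.intervalIntegral_comp_comm hi
    rw [hK] at h
    simpa [Complex.exp_ofReal_mul_I_re, hu0] using h
  -- differentiate in t
  have hder : ∀ x, ∀ t ∈ Set.Icc (0:ℝ) (T/2), HasDerivWithinAt (fun t' => Real.sin (u x t'))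
      (Real.cos (u x t) * ut x t) (Set.Icc 0 (T/2)) t := fun x t ht =>
    ((hut x t (hsub ht)).mono hsub).sin
  obtain ⟨C, hC⟩ : ∃ C, ∀ p ∈ (Set.Icc (0:ℝ) 1 ×ˢ Set.Icc (0:ℝ) (T/2)), ‖ut p.1 p.2‖ ≤ C :=
    (isCompact_Icc.prod isCompact_Icc).exists_bound_of_continuousOn
      (hutc.mono (Set.prod_mono (Set.subset_univ _) hsub))
  have hset : Set.Icc (0:ℝ) (T/2) \ {0} = Set.Ioc 0 (T/2) := Set.Icc_diff_left
  have hlim : Filter.Tendsto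
      (fun t => ∫ x in (0:ℝ)..1, slope (fun t' => Real.sin (u x t')) 0 t)
      (nhdsWithin 0 (Set.Ioc (0:ℝ) (T/2)))
      (nhds (∫ x in (0:ℝ)..1, Real.cos (u x 0) * ut x 0)) := by
    refine tendsto_integral_filter_of_dominated_convergence (fun _ => C) ?_ ?_ (by simp) ?_
    · filter_upwards [self_mem_nhdsWithin] with t ht
      have := hcu t (hsub ⟨ht.1.le, ht.2⟩)
      have := hcu 0 h0
      apply Continuous.aestronglyMeasurable
      simp only [slope_def_field]
      fun_prop
    · filter_upwards [self_mem_nhdsWithin] with t ht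
      refine Filter.Eventually.of_forall fun x hx => ?_
      rw [Set.uIoc_of_le zero_le_one] at hx
      have h := (convex_Icc (0:ℝ) (T/2)).norm_image_sub_le_of_norm_hasDerivWithin_le (C := C)
        (hder x) (fun s hs => ?_) (x := 0) (y := t) ⟨le_rfl, hS.le⟩ ⟨ht.1.le, ht.2⟩
      · rw [slope_def_field, norm_div, div_le_iff₀ (by rw [norm_pos_iff]; linarith [ht.1])]
        exact h
      · rw [norm_mul]
        have h1 := hC (x, s) ⟨⟨hx.1.le, hx.2⟩, hs⟩
        have h2 : ‖Real.cos (u x s)‖ ≤ 1 := Real.abs_cos_le_one _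
        simp only at h1
        nlinarith [norm_nonneg (ut x s), norm_nonneg (Real.cos (u x s))]
    · refine Filter.Eventually.of_forall fun x _ => ?_
      have := hasDerivWithinAt_iff_tendsto_slope.1 (hder x 0 ⟨le_rfl, hS.le⟩)
      rwa [hset] at this
  have hzero : ∫ x in (0:ℝ)..1, Real.cos (u x 0) * ut x 0 = 0 := by
    have hne : (nhdsWithin 0 (Set.Ioc (0:ℝ) (T/2))).NeBot := by
      rw [nhdsWithin_Ioc_eq_nhdsGT hS]; infer_instance
    refine tendsto_nhds_unique hlim (tendsto_const_nhds.congr' ?_)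
    filter_upwards [self_mem_nhdsWithin] with t ht
    have ht' := hsub ⟨ht.1.le, ht.2⟩
    have hc1 := hcu t ht'
    have hc0 := hcu 0 h0
    simp only [slope_def_field]
    rw [intervalIntegral.integral_div, intervalIntegral.integral_sub, hsin0 t ht', hsin0 0 h0]
    · simp
    · exact (Real.continuous_sin.comp hc1).intervalIntegrable _ _
    · exact (Real.continuous_sin.comp hc0).intervalIntegrable _ _
  apply hK1
  obtain rfl : (fun x => u x 0) = u₀ := funext hu0
  have hc0 := hcu 0 h0
  have hct0 := hcut 0 h0
  unfold K1 pInv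
  simp only [hutint 0 h0]
  set c := ∫ y in (0:ℝ)..1, (ut y 0 - ut 0 0) with hc
  have : ∀ x, Real.cos (u x 0) * (ut x 0 - ut 0 0 - c)
      = Real.cos (u x 0) * ut x 0 - Real.cos (u x 0) * (ut 0 0 + c) := fun x => by ring
  simp only [this]
  rw [intervalIntegral.integral_sub, hzero, intervalIntegral.integral_mul_const, hcos0]
  · simp
  · exact ((Real.continuous_cos.comp hc0).mul hct0).intervalIntegrable _ _
  · exact ((Real.continuous_cos.comp hc0).mul continuous_const).intervalIntegrable _ _
end

section
/- For every k ∈ ℤ there exists an infinitely differentiable function u₀: ℝ → ℝ of topological charge k such that ∫₀¹ exp(i u₀(x)) dx = 0 (in particular ∫₀¹ sin(u₀) = 0 and ∫₀¹ cos(u₀) = 0) and K₁(u₀) ≠ 0. -/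
open MeasureTheory Real intervalIntegral

theorem aux_main (k : ℤ) (u X Y H : ℝ → ℝ) (hu : ContDiff ℝ (⊤ : ℕ∞) u)
    (hk : ∀ x, u (x + 1) = u x + 2 * π * k)
    (hX : ∀ x, HasDerivAt X (Real.cos (u x)) x)
    (hY : ∀ x, HasDerivAt Y (Real.sin (u x)) x)
    (hH : ∀ x, HasDerivAt H (Real.cos (u x) * Y x) x)
    (hX1 : X 1 = X 0) (hY1 : Y 1 = Y 0) (hH1 : H 1 ≠ H 0) :
    ∃ u₀ : ℝ → ℝ, ContDiff ℝ (⊤ : ℕ∞) u₀ ∧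
      (∀ x, u₀ (x + 1) = u₀ x + 2 * π * k) ∧
      (∫ x in (0:ℝ)..1, Complex.exp ((u₀ x : ℂ) * Complex.I)) = 0 ∧
      (∫ x in (0:ℝ)..1, Real.sin (u₀ x)) = 0 ∧
      (∫ x in (0:ℝ)..1, Real.cos (u₀ x)) = 0 ∧
      K1 u₀ ≠ 0 := by
  have huc : Continuous u := hu.continuous
  have hYc : Continuous Y := continuous_iff_continuousAt.2 fun x => (hY x).continuousAt
  have cc : Continuous fun x => Real.cos (u x) := Real.continuous_cos.comp huc
  have cs : Continuous fun x => Real.sin (u x) := Real.continuous_sin.comp huc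
  have iX : ∀ b, (∫ x in (0:ℝ)..b, Real.cos (u x)) = X b - X 0 := fun b =>
    integral_eq_sub_of_hasDerivAt (fun x _ => hX x) (cc.intervalIntegrable _ _)
  have iY : ∀ b, (∫ x in (0:ℝ)..b, Real.sin (u x)) = Y b - Y 0 := fun b =>
    integral_eq_sub_of_hasDerivAt (fun x _ => hY x) (cs.intervalIntegrable _ _)
  have iH : (∫ x in (0:ℝ)..1, Real.cos (u x) * Y x) = H 1 - H 0 :=
    integral_eq_sub_of_hasDerivAt (fun x _ => hH x) ((cc.mul hYc).intervalIntegrable _ _)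
  have hs : (∫ x in (0:ℝ)..1, Real.sin (u x)) = 0 := by rw [iY, hY1, sub_self]
  have hc : (∫ x in (0:ℝ)..1, Real.cos (u x)) = 0 := by rw [iX, hX1, sub_self]
  refine ⟨u, hu, hk, ?_, hs, hc, ?_⟩
  · have h1 : ∀ x : ℝ, Complex.exp ((u x : ℂ) * Complex.I)
        = ((Real.cos (u x) : ℝ) : ℂ) + ((Real.sin (u x) : ℝ) : ℂ) * Complex.I := by
      intro x
      rw [Complex.exp_mul_I]
      push_cast
      rfl
    simp_rw [h1]
    rw [intervalIntegral.integral_add, intervalIntegral.integral_mul_const,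
      intervalIntegral.integral_ofReal, intervalIntegral.integral_ofReal, hs, hc]
    · simp
    · exact (Complex.continuous_ofReal.comp cc).intervalIntegrable _ _
    · exact ((Complex.continuous_ofReal.comp cs).mul continuous_const).intervalIntegrable _ _
  · unfold K1 pInv
    generalize (∫ y in (0:ℝ)..1, ∫ s in (0:ℝ)..y, Real.sin (u s)) = m
    have h2 : ∀ x, Real.cos (u x) * ((∫ s in (0:ℝ)..x, Real.sin (u s)) - m)
        = Real.cos (u x) * Y x - Real.cos (u x) * (Y 0 + m) := by
      intro x; rw [iY]; ring
    simp_rw [h2]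
    have j1 : IntervalIntegrable (fun x => Real.cos (u x) * Y x) volume 0 1 :=
      (cc.mul hYc).intervalIntegrable _ _
    have j2 : IntervalIntegrable (fun x => Real.cos (u x) * (Y 0 + m)) volume 0 1 :=
      (cc.mul continuous_const).intervalIntegrable _ _
    rw [intervalIntegral.integral_sub j1 j2,
      intervalIntegral.integral_mul_const, iH, hc]
    intro h
    apply hH1
    linarith

theorem cos_four_arctan {p q D : ℝ} (hp : p ≠ 0) (hD : D = p ^ 2 + q ^ 2) (hD0 : 0 < D) :
    Real.cos (4 * Real.arctan (q / p)) = (p ^ 4 - 6 * p ^ 2 * q ^ 2 + q ^ 4) / D ^ 2 := by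
  have h1 : Real.cos (Real.arctan (q / p)) ^ 2 = p ^ 2 / D := by
    rw [Real.cos_sq_arctan, hD]
    have : p ^ 2 + q ^ 2 ≠ 0 := by rw [← hD]; exact hD0.ne'
    have h3 : 1 + (q / p) ^ 2 = (p ^ 2 + q ^ 2) / p ^ 2 := by field_simp
    rw [h3, one_div_div]
  have e : 4 * Real.arctan (q / p) = 2 * (2 * Real.arctan (q / p)) := by ring
  rw [e, Real.cos_two_mul, Real.cos_two_mul, h1]
  have := hD0.ne'
  field_simp
  rw [hD]
  ring

theorem sin_four_arctan {p q D : ℝ} (hp : p ≠ 0) (hD : D = p ^ 2 + q ^ 2) (hD0 : 0 < D) :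
    Real.sin (4 * Real.arctan (q / p)) = 4 * p * q * (p ^ 2 - q ^ 2) / D ^ 2 := by
  have h1 : Real.cos (Real.arctan (q / p)) ^ 2 = p ^ 2 / D := by
    rw [Real.cos_sq_arctan, hD]
    have : p ^ 2 + q ^ 2 ≠ 0 := by rw [← hD]; exact hD0.ne'
    have h3 : 1 + (q / p) ^ 2 = (p ^ 2 + q ^ 2) / p ^ 2 := by field_simp
    rw [h3, one_div_div]
  have h2 : Real.sin (Real.arctan (q / p)) = q / p * Real.cos (Real.arctan (q / p)) := by
    have := Real.tan_arctan (q / p)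
    rw [Real.tan_eq_sin_div_cos] at this
    have hc := (Real.cos_arctan_pos (q / p)).ne'
    rwa [div_eq_iff hc] at this
  have e : 4 * Real.arctan (q / p) = 2 * (2 * Real.arctan (q / p)) := by ring
  have h3 : Real.sin (2 * Real.arctan (q / p)) = 2 * (q / p) * (p ^ 2 / D) := by
    rw [Real.sin_two_mul, h2, ← h1]; ring
  rw [e, Real.sin_two_mul, Real.cos_two_mul, h3, h1]
  have := hD0.ne'
  field_simp
  rw [hD]
  ring

theorem aux_zero : ∃ u X Y H : ℝ → ℝ, ContDiff ℝ (⊤ : ℕ∞) u ∧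
    (∀ x, u (x + 1) = u x) ∧
    (∀ x, HasDerivAt X (Real.cos (u x)) x) ∧
    (∀ x, HasDerivAt Y (Real.sin (u x)) x) ∧
    (∀ x, HasDerivAt H (Real.cos (u x) * Y x) x) ∧
    X 1 = X 0 ∧ Y 1 = Y 0 ∧ H 1 ≠ H 0 := by
  obtain ⟨a, ha0, ha⟩ : ∃ a : ℝ, 0 < a ∧ a ^ 2 = 1 / 3 :=
    ⟨√(1 / 3), by positivity, Real.sq_sqrt (by norm_num)⟩
  obtain ⟨e, he⟩ : ∃ e : ℝ → ℝ, e = fun x => a * Real.cos (2 * π * x) := ⟨_, rfl⟩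
  obtain ⟨q, hq⟩ : ∃ q : ℝ → ℝ, q = fun x => a * Real.sin (2 * π * x) := ⟨_, rfl⟩
  have hpi := Real.pi_pos
  have hpi0 := hpi.ne'
  have hlin : ∀ x : ℝ, HasDerivAt (fun x : ℝ => 2 * π * x) (2 * π) x := fun x => by
    simpa using (hasDerivAt_id x).const_mul (2 * π)
  have de : ∀ x, HasDerivAt e (-(2 * π * q x)) x := by
    intro x; rw [he, hq]
    exact ((hlin x).cos.const_mul a).congr_deriv (by ring)
  have dq : ∀ x, HasDerivAt q (2 * π * e x) x := by
    intro x; rw [he, hq]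
    exact ((hlin x).sin.const_mul a).congr_deriv (by ring)
  have hsq : ∀ x, q x ^ 2 = 1 / 3 - e x ^ 2 := by
    intro x; rw [he, hq]
    have := Real.sin_sq_add_cos_sq (2 * π * x)
    simp only [mul_pow, ha]
    linarith
  have hp : ∀ x, 0 < 1 - e x := by
    intro x
    nlinarith [hsq x, sq_nonneg (q x)]
  have hD : ∀ x, 0 < 4 / 3 - 2 * e x := by
    intro x
    nlinarith [hsq x, sq_nonneg (q x), hp x]
  have hDe : ∀ x, 4 / 3 - 2 * e x = (1 - e x) ^ 2 + q x ^ 2 := by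
    intro x; rw [hsq]; ring
  have e1 : e 1 = e 0 := by rw [he]; simp
  have q1 : q 1 = 0 := by rw [hq]; simp
  have q0 : q 0 = 0 := by rw [hq]; simp
  have ep : ∀ x, e (x + 1) = e x := by intro x; rw [he]; simp [mul_add]
  have qp : ∀ x, q (x + 1) = q x := by intro x; rw [hq]; simp [mul_add]
  have ce : ContDiff ℝ (⊤ : ℕ∞) e := by rw [he]; fun_prop
  have cq : ContDiff ℝ (⊤ : ℕ∞) q := by rw [hq]; fun_prop
  have hc := fun x => cos_four_arctan (hp x).ne' (hDe x) (hD x)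
  have hs := fun x => sin_four_arctan (hp x).ne' (hDe x) (hD x)
  have dD : ∀ x, HasDerivAt (fun x => 4 / 3 - 2 * e x) (4 * π * q x) x := fun x =>
    (((de x).const_mul 2).const_sub (4 / 3)).congr_deriv (by ring)
  refine ⟨fun x => 4 * Real.arctan (q x / (1 - e x)),
    fun x => (q x * e x - 4 / 3 * q x + 4 / 9 * (q x / (4 / 3 - 2 * e x))) / (2 * π),
    fun x => (e x ^ 2 - 4 / 3 * e x - 1 / 6 - 4 / 27 * (1 / (4 / 3 - 2 * e x))) / (2 * π),
    fun x => (x * (2 * π) / 4 - q x * (32 / 81 - 16 / 9 * e x + 172 / 27 * e x ^ 2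
      - 101 / 9 * e x ^ 3 + 8 * e x ^ 4 - 2 * e x ^ 5) / (4 / 3 - 2 * e x) ^ 2) / (2 * π) ^ 2,
    ?_, ?_, ?_, ?_, ?_, ?_, ?_, ?_⟩
  · exact contDiff_const.mul
      (Real.contDiff_arctan.comp (cq.div (contDiff_const.sub ce) fun x => (hp x).ne'))
  · intro x; simp only [ep, qp]
  · intro x
    simp only [hc]
    have hd := (hD x).ne'
    refine (((((dq x).mul (de x)).sub ((dq x).const_mul (4 / 3))).add
      (((dq x).div (dD x) hd).const_mul (4 / 9))).div_const (2 * π)).congr_deriv ?_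
    have h2 := hsq x
    generalize hdd : 4 / 3 - 2 * e x = d at hd ⊢
    have hE : e x = 2 / 3 - d / 2 := by linarith
    rw [hE] at h2 ⊢
    generalize q x = Q at h2 ⊢
    have h4 : Q ^ 4 = (1 / 3 - (2 / 3 - d / 2) ^ 2) ^ 2 := by rw [← h2]; ring
    rw [h4, h2]
    field_simp
    ring_nf
    simp only [h2]
    ring
  · intro x
    simp only [hs]
    have hd := (hD x).ne'
    refine ((((((de x).pow 2).sub ((de x).const_mul (4 / 3))).sub_const (1 / 6)).sub
      (((hasDerivAt_const x (1 : ℝ)).div (dD x) hd).const_mul (4 / 27))).div_const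
        (2 * π)).congr_deriv ?_
    have h2 := hsq x
    generalize hdd : 4 / 3 - 2 * e x = d at hd ⊢
    have hE : e x = 2 / 3 - d / 2 := by linarith
    rw [hE] at h2 ⊢
    generalize q x = Q at h2 ⊢
    rw [h2]
    field_simp
    push_cast
    ring
  · intro x
    simp only [hc]
    have hd := (hD x).ne'
    have dR : HasDerivAt (fun x => 32 / 81 - 16 / 9 * e x + 172 / 27 * e x ^ 2
      - 101 / 9 * e x ^ 3 + 8 * e x ^ 4 - 2 * e x ^ 5)
      ((- 16 / 9 + 344 / 27 * e x - 101 / 3 * e x ^ 2 + 32 * e x ^ 3 - 10 * e x ^ 4)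
        * (-(2 * π * q x))) x := by
      refine ((((((de x).const_mul (16 / 9)).const_sub (32 / 81)).add
        (((de x).pow 2).const_mul (172 / 27))).sub (((de x).pow 3).const_mul (101 / 9))).add
        (((de x).pow 4).const_mul 8)).sub (((de x).pow 5).const_mul 2) |>.congr_deriv ?_
      push_cast
      ring
    refine (((((hasDerivAt_id x).mul_const (2 * π)).div_const 4).sub
      (((dq x).mul dR).div ((dD x).pow 2) (pow_ne_zero 2 hd))).div_const
        ((2 * π) ^ 2)).congr_deriv ?_
    have h2 := hsq x
    simp only [Pi.pow_apply, Pi.mul_apply]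
    generalize hdd : 4 / 3 - 2 * e x = d at hd ⊢
    have hE : e x = 2 / 3 - d / 2 := by linarith
    rw [hE] at h2 ⊢
    generalize q x = Q at h2 ⊢
    have h4 : Q ^ 4 = (1 / 3 - (2 / 3 - d / 2) ^ 2) ^ 2 := by rw [← h2]; ring
    rw [h4, h2]
    field_simp
    ring_nf
    simp only [h2]
    ring
  · simp only [q1, q0]; simp
  · simp only [e1]
  · simp only [q1, q0]
    simp [hpi0]

/-- for every `k ∈ ℤ` there is a C^∞ function `u₀` of topological charge
`k` with `∫₀¹ exp(i u₀ x) dx = 0` (hence `∫₀¹ sin u₀ = 0` and `∫₀¹ cos u₀ = 0`)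
and `K₁(u₀) ≠ 0`. -/
theorem exists_smooth_bad_initial_datum (k : ℤ) :
    ∃ u₀ : ℝ → ℝ, ContDiff ℝ (⊤ : ℕ∞) u₀ ∧
      (∀ x, u₀ (x + 1) = u₀ x + 2 * π * k) ∧
      (∫ x in (0:ℝ)..1, Complex.exp ((u₀ x : ℂ) * Complex.I)) = 0 ∧
      (∫ x in (0:ℝ)..1, Real.sin (u₀ x)) = 0 ∧
      (∫ x in (0:ℝ)..1, Real.cos (u₀ x)) = 0 ∧
      K1 u₀ ≠ 0 := by
  by_cases hk : k = 0
  · subst hk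
    obtain ⟨u, X, Y, H, hu, hper, hX, hY, hH, h1, h2, h3⟩ := aux_zero
    exact aux_main 0 u X Y H hu (fun x => by simp [hper]) hX hY hH h1 h2 h3
  · have hk' : (k : ℝ) ≠ 0 := by exact_mod_cast hk
    have hpi0 := Real.pi_pos.ne'
    obtain ⟨w, hw⟩ : ∃ w : ℝ, w = 2 * π * k := ⟨_, rfl⟩
    have hw0 : w ≠ 0 := by rw [hw]; positivity
    have hlin : ∀ x : ℝ, HasDerivAt (fun x : ℝ => w * x) w x := fun x => by
      simpa using (hasDerivAt_id x).const_mul w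
    have hsw : Real.sin w = 0 := by
      rw [hw, show 2 * π * (k : ℝ) = ((2 * k : ℤ) : ℝ) * π by push_cast; ring]
      exact Real.sin_int_mul_pi _
    have hcw : Real.cos w = 1 := by
      rw [hw, mul_comm]; exact Real.cos_int_mul_two_pi k
    refine aux_main k (fun x => w * x) (fun x => Real.sin (w * x) / w)
      (fun x => -Real.cos (w * x) / w)
      (fun x => -(x / 2 + Real.sin (w * x) * Real.cos (w * x) / (2 * w)) / w)
      (by fun_prop) (fun x => by rw [hw]; ring) ?_ ?_ ?_ ?_ ?_ ?_
    · intro x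
      exact ((hlin x).sin.div_const w).congr_deriv (by field_simp)
    · intro x
      exact ((hlin x).cos.neg.div_const w).congr_deriv (by field_simp)
    · intro x
      refine ((((hasDerivAt_id x).div_const 2).add
        (((hlin x).sin.mul (hlin x).cos).div_const (2 * w))).neg.div_const w).congr_deriv ?_
      have := Real.sin_sq_add_cos_sq (w * x)
      field_simp
      linear_combination this
    · simp [hsw]
    · simp [hcw]
    · simp [hsw, hw0]
end
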